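/- arXiv:1902.08770 — 4 statements merged into one kernel-verified Lean document; each statement's English description precedes it below -/
import Mathlib

section
/- Let a = (a_{ij}) be a real symmetric positive definite 2×2 matrix with determinant A = a₁₁a₂₂ − a₁₂² > 0. The function α₁ (viewed as a function of (μ₁, μ₂, x, y) ∈ ℝ⁴ via η = x + iy) is locally integrable on ℝ⁴, and for every smooth compactly supported function φ : ℝ⁴ → ℝ one has ∫_{ℝ⁴} α₁ · (a₂₂ ∂²φ/∂μ₁² − 2a₁₂ ∂²φ/∂μ₁∂μ₂ + a₁₁ ∂²φ/∂μ₂² + ∂²φ/∂x² + ∂²φ/∂y²) dμ₁ dμ₂ dx dy = −2π ∫₀^∞ φ(0, s, 0, 0) ds. (This is the weak form of the equation (Δ_a α₁) dVol_a = −2π√A ∫_{𝔇₁} dμ₂, where Δ_a = a^{ij}∂²/∂μᵢ∂μⱼ + 4A⁻¹∂²/∂η∂η̄ and dVol_a = A^{3/2} dμ₁dμ₂dxdy.) -/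
open MeasureTheory

/-- The function `α₁` of the paper. -/
noncomputable def alpha1 (a11 a12 a22 μ1 μ2 : ℝ) (η : ℂ) : ℝ :=
  (1 / (2 * Real.sqrt (μ1 ^ 2 + a22 * Complex.normSq η))) *
    (1 / 2 + (1 / Real.pi) * Real.arctan ((a22 * μ2 + a12 * μ1) /
      (Real.sqrt (a11 * a22 - a12 ^ 2) * Real.sqrt (μ1 ^ 2 + a22 * Complex.normSq η))))

/-- `α₁` viewed as a function on `ℝ⁴` via `η = x + iy`, with coordinates `(μ₁, μ₂, x, y)`. -/
noncomputable def alpha1R4 (a11 a12 a22 : ℝ) (x : Fin 4 → ℝ) : ℝ :=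
  alpha1 a11 a12 a22 (x 0) (x 1) ((x 2 : ℂ) + (x 3 : ℂ) * Complex.I)

/-- The partial derivative in the `i`-th coordinate direction of `ℝ⁴`. -/
noncomputable def pder (i : Fin 4) (φ : (Fin 4 → ℝ) → ℝ) (x : Fin 4 → ℝ) : ℝ :=
  fderiv ℝ φ x (Pi.single i 1)

/-!
In dimension `d`, `‖x‖ ^ (2 - d)` is a multiple of the fundamental solution of the Laplacian: it is
the limit as `ε → 0` of `(ε + ‖x‖ ^ 2) ^ (1 - d / 2)`, whose Laplacian
`-d (d - 2) ε (ε + ‖x‖ ^ 2) ^ (-1 - d / 2)` is a fixed integrable bump rescaled by `ε ^ (-1 / 2)`,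
hence an approximate identity. Superposing translates along a half-line, which converges for
`d ≥ 4`, gives a potential whose Laplacian is a multiple of the arc measure of the half-line.
In linear coordinates turning the operator of the theorem into the Laplacian of `ℝ⁴`, the function
`α₁` is exactly this potential for the half-line `𝔇₁`: the arctangent is the integral over
`t > 0` of the inverse of a quadratic polynomial in `t`.
-/

open Filter Module Topology
open scoped Laplacian Matrix

section Calculus

variable {E F : Type*} [NormedAddCommGroup E] [NormedAddCommGroup F] [NormedSpace ℝ F]

lemma fderiv_fderiv_apply [NormedSpace ℝ E] {f : E → F} (hf : ContDiff ℝ 2 f) (x v w : E) :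
    fderiv ℝ (fun y ↦ fderiv ℝ f y v) x w = fderiv ℝ (fderiv ℝ f) x w v := by
  have hdiff : DifferentiableAt ℝ (fderiv ℝ f) x :=
    (hf.fderiv_right (m := 1) (by norm_num)).differentiable (by simp) x
  rw [fderiv_clm_apply hdiff (differentiableAt_const v)]
  simp

lemma contDiff_fderiv_apply_const [NormedSpace ℝ E] {f : E → F} {n : ℕ} (hf : ContDiff ℝ (n + 1) f)
    (v : E) : ContDiff ℝ n (fun y ↦ fderiv ℝ f y v) :=
  (hf.fderiv_right le_rfl).clm_apply contDiff_const

variable [InnerProductSpace ℝ E] [FiniteDimensional ℝ E] {ι : Type*} [Fintype ι]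

lemma laplacian_eq_sum_fderiv_fderiv {f : E → F} (hf : ContDiff ℝ 2 f) (b : OrthonormalBasis ι ℝ E)
    (x : E) : Δ f x = ∑ i, fderiv ℝ (fun y ↦ fderiv ℝ f y (b i)) x (b i) := by
  simp only [InnerProductSpace.laplacian_eq_iteratedFDeriv_orthonormalBasis f b,
    fderiv_fderiv_apply hf, iteratedFDeriv_two_apply, Matrix.cons_val_zero, Matrix.cons_val_one]

lemma laplacian_comp_clm {G : Type*} [NormedAddCommGroup G] [NormedSpace ℝ G] {φ : G → F}
    (hφ : ContDiff ℝ 2 φ) (T : E →L[ℝ] G) (b : OrthonormalBasis ι ℝ E) (x : E) :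
    Δ (φ ∘ T) x = ∑ i, fderiv ℝ (fderiv ℝ φ) (T x) (T (b i)) (T (b i)) := by
  simp only [InnerProductSpace.laplacian_eq_iteratedFDeriv_orthonormalBasis _ b,
    T.iteratedFDeriv_comp_right hφ x le_rfl,
    ContinuousMultilinearMap.compContinuousLinearMap_apply, iteratedFDeriv_two_apply,
    Matrix.cons_val_zero, Matrix.cons_val_one]

lemma laplacian_comp_add_right (f : E → F) (a x : E) :
    Δ (fun y ↦ f (y + a)) x = Δ f (x + a) := by
  simp only [InnerProductSpace.laplacian_eq_iteratedFDeriv_stdOrthonormalBasis,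
    iteratedFDeriv_comp_add_right]

lemma continuous_laplacian {f : E → F} (hf : ContDiff ℝ 2 f) : Continuous (Δ f) := by
  rw [InnerProductSpace.laplacian_eq_iteratedFDeriv_stdOrthonormalBasis]
  have := hf.continuous_iteratedFDeriv (m := 2) le_rfl
  fun_prop

lemma hasCompactSupport_laplacian {f : E → F} (hf : HasCompactSupport f) :
    HasCompactSupport (Δ f) := by
  refine (hf.iteratedFDeriv (𝕜 := ℝ) 2).mono fun x hx ↦ ?_
  contrapose! hx
  simp_all [InnerProductSpace.laplacian_eq_iteratedFDeriv_stdOrthonormalBasis]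

end Calculus

section IntegrationByParts

variable {E : Type*} [NormedAddCommGroup E] [MeasurableSpace E] [BorelSpace E]

lemma integral_mul_fderiv_eq_neg_of_hasCompactSupport [NormedSpace ℝ E] [FiniteDimensional ℝ E]
    (μ : Measure E) [μ.IsAddHaarMeasure] {u φ : E → ℝ}
    (hu : ContDiff ℝ 1 u) (hφ : ContDiff ℝ 1 φ) (hφc : HasCompactSupport φ) (v : E) :
    ∫ x, u x * fderiv ℝ φ x v ∂μ = -∫ x, fderiv ℝ u x v * φ x ∂μ := by
  have hu' := (contDiff_fderiv_apply_const (n := 0) hu v).continuous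
  have hφ' := (contDiff_fderiv_apply_const (n := 0) hφ v).continuous
  refine integral_mul_fderiv_eq_neg_fderiv_mul_of_integrable ?_ ?_ ?_
    (fun x _ ↦ hu.differentiable one_ne_zero x) (fun x _ ↦ hφ.differentiable one_ne_zero x)
  · exact (hu'.mul hφ.continuous).integrable_of_hasCompactSupport hφc.mul_left
  · exact (hu.continuous.mul hφ').integrable_of_hasCompactSupport (hφc.fderiv_apply ℝ v).mul_left
  · exact (hu.continuous.mul hφ.continuous).integrable_of_hasCompactSupport hφc.mul_left

variable [InnerProductSpace ℝ E] [FiniteDimensional ℝ E] (μ : Measure E) [μ.IsAddHaarMeasure]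

theorem integral_mul_laplacian {u φ : E → ℝ} (hu : ContDiff ℝ 2 u) (hφ : ContDiff ℝ 2 φ)
    (hφc : HasCompactSupport φ) : ∫ x, u x * Δ φ x ∂μ = ∫ x, Δ u x * φ x ∂μ := by
  have hsecond {f : E → ℝ} (hf : ContDiff ℝ 2 f) (v : E) :
      Continuous fun x ↦ fderiv ℝ (fun y ↦ fderiv ℝ f y v) x v :=
    (contDiff_fderiv_apply_const (n := 0) (contDiff_fderiv_apply_const (n := 1) hf v) v).continuous
  simp only [laplacian_eq_sum_fderiv_fderiv hu (stdOrthonormalBasis ℝ E),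
    laplacian_eq_sum_fderiv_fderiv hφ (stdOrthonormalBasis ℝ E), Finset.mul_sum, Finset.sum_mul]
  rw [integral_finsetSum, integral_finsetSum]
  · refine Finset.sum_congr rfl fun i _ ↦ ?_
    rw [integral_mul_fderiv_eq_neg_of_hasCompactSupport μ (hu.of_le one_le_two)
        (contDiff_fderiv_apply_const (n := 1) hφ _) (hφc.fderiv_apply ℝ _),
      integral_mul_fderiv_eq_neg_of_hasCompactSupport μ
        (contDiff_fderiv_apply_const (n := 1) hu _) (hφ.of_le one_le_two) hφc, neg_neg]
  · exact fun i _ ↦ ((hsecond hu _).mul hφ.continuous).integrable_of_hasCompactSupport hφc.mul_left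
  · exact fun i _ ↦ (hu.continuous.mul (hsecond hφ _)).integrable_of_hasCompactSupport
      ((hφc.fderiv_apply ℝ _).fderiv_apply ℝ _).mul_left

end IntegrationByParts

section RadialPowers

lemma pow_eq_sq_rpow_half {y : ℝ} (hy : 0 ≤ y) (d : ℕ) : y ^ d = (y ^ 2) ^ (d / 2 : ℝ) := by
  rw [← Real.rpow_natCast y 2, ← Real.rpow_mul hy, ← Real.rpow_natCast]
  push_cast
  ring_nf

variable {E : Type*} [NormedAddCommGroup E] [InnerProductSpace ℝ E] {ε : ℝ}

lemma contDiff_add_norm_sq_rpow (hε : 0 < ε) (p : ℝ) {n : WithTop ℕ∞} :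
    ContDiff ℝ n fun x : E ↦ (ε + ‖x‖ ^ 2) ^ p :=
  (contDiff_const.add (contDiff_norm_sq ℝ)).rpow_const_of_ne fun x ↦ by positivity

lemma fderiv_add_norm_sq_rpow (hε : 0 < ε) (p : ℝ) (x v : E) :
    fderiv ℝ (fun y : E ↦ (ε + ‖y‖ ^ 2) ^ p) x v =
      2 * p * (ε + ‖x‖ ^ 2) ^ (p - 1) * inner ℝ x v := by
  have h := ((hasStrictFDerivAt_norm_sq x).hasFDerivAt.const_add ε).rpow_const (p := p)
    (Or.inl (by positivity))
  rw [h.fderiv]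
  simp only [smul_apply, innerSL_apply_apply, smul_eq_mul, nsmul_eq_mul]
  push_cast
  ring

lemma fderiv_fderiv_add_norm_sq_rpow (hε : 0 < ε) (p : ℝ) (x v : E) :
    fderiv ℝ (fun z ↦ fderiv ℝ (fun y : E ↦ (ε + ‖y‖ ^ 2) ^ p) z v) x v =
      4 * p * (p - 1) * (ε + ‖x‖ ^ 2) ^ (p - 2) * inner ℝ x v ^ 2 +
        2 * p * (ε + ‖x‖ ^ 2) ^ (p - 1) * ‖v‖ ^ 2 := by
  simp only [fderiv_add_norm_sq_rpow hε, mul_assoc (2 : ℝ)]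
  have hpow : HasFDerivAt (fun y : E ↦ (ε + ‖y‖ ^ 2) ^ (p - 1)) _ x :=
    ((contDiff_add_norm_sq_rpow hε (p - 1)).differentiable one_ne_zero x).hasFDerivAt
  have hinner : HasFDerivAt (fun y : E ↦ inner ℝ y v) _ x :=
    (hasFDerivAt_id x).inner ℝ (hasFDerivAt_const v x)
  rw [(((hpow.const_mul p).fun_mul hinner).const_mul 2).fderiv]
  simp [fderiv_add_norm_sq_rpow hε, sub_sub, one_add_one_eq_two]
  ring

/-- The Newtonian kernel `‖x‖ ^ (2 - d)` of a Euclidean space of dimension `d`, without the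
normalizing constant. For `d > 2` its value at the origin is the junk value `0`. -/
noncomputable def newtonKernel (x : E) : ℝ := ‖x‖ ^ (2 - finrank ℝ E : ℝ)

/-- The smooth approximation `(ε + ‖x‖ ^ 2) ^ (1 - d / 2)` of `newtonKernel` in dimension `d`. -/
noncomputable def smoothedNewtonKernel (ε : ℝ) (x : E) : ℝ :=
  (ε + ‖x‖ ^ 2) ^ (1 - finrank ℝ E / 2 : ℝ)

/-- The bump `(1 + ‖x‖ ^ 2) ^ (-1 - d / 2)` in dimension `d`: up to a constant, the Laplacian of
`smoothedNewtonKernel 1`. -/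
noncomputable def newtonBump (x : E) : ℝ := (1 + ‖x‖ ^ 2) ^ (-1 - finrank ℝ E / 2 : ℝ)

lemma pow_finrank_mul_newtonBump_smul {c : ℝ} (hc : 0 < c) (x : E) :
    c ^ finrank ℝ E * newtonBump (c • x) =
      (c ^ 2)⁻¹ * ((c ^ 2)⁻¹ + ‖x‖ ^ 2) ^ (-1 - finrank ℝ E / 2 : ℝ) := by
  have hfactor : 1 + ‖c • x‖ ^ 2 = c ^ 2 * ((c ^ 2)⁻¹ + ‖x‖ ^ 2) := by
    rw [norm_smul, mul_pow, Real.norm_eq_abs, sq_abs]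
    field_simp
  have hpow : (c ^ 2) ^ (-1 - finrank ℝ E / 2 : ℝ) = (c ^ finrank ℝ E)⁻¹ * (c ^ 2)⁻¹ := by
    rw [← Real.rpow_natCast c 2, ← Real.rpow_mul hc.le, ← Real.rpow_natCast c (finrank ℝ E),
      ← Real.rpow_neg hc.le, ← Real.rpow_neg hc.le, ← Real.rpow_add hc]
    push_cast
    ring_nf
  rw [newtonBump, hfactor, Real.mul_rpow (by positivity) (by positivity), hpow]
  field_simp

lemma newtonKernel_eq_sq_rpow (x : E) :
    newtonKernel x = (‖x‖ ^ 2) ^ (1 - finrank ℝ E / 2 : ℝ) := by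
  rw [newtonKernel, ← Real.rpow_natCast, ← Real.rpow_mul (norm_nonneg x)]
  push_cast
  ring_nf

lemma smoothedNewtonKernel_le_newtonKernel (hd : 2 ≤ finrank ℝ E) {ε : ℝ} (hε : 0 ≤ ε) {x : E}
    (hx : x ≠ 0) : smoothedNewtonKernel ε x ≤ newtonKernel x := by
  have hd' : (2 : ℝ) ≤ finrank ℝ E := mod_cast hd
  rw [newtonKernel_eq_sq_rpow]
  exact Real.rpow_le_rpow_of_nonpos (by positivity) (by linarith) (by linarith)

lemma contDiff_smoothedNewtonKernel (hε : 0 < ε) {n : WithTop ℕ∞} :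
    ContDiff ℝ n (smoothedNewtonKernel ε : E → ℝ) :=
  contDiff_add_norm_sq_rpow hε _

lemma tendsto_norm_pow_mul_newtonBump :
    Tendsto (fun x : E ↦ ‖x‖ ^ finrank ℝ E * newtonBump x) (Bornology.cobounded E) (𝓝 0) := by
  have hsq : Tendsto (fun x : E ↦ (‖x‖ ^ 2)⁻¹) (Bornology.cobounded E) (𝓝 0) :=
    ((tendsto_pow_atTop two_ne_zero).comp tendsto_norm_cobounded_atTop).inv_tendsto_atTop
  refine squeeze_zero' (.of_forall fun x ↦ by unfold newtonBump; positivity) ?_ hsq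
  filter_upwards [tendsto_norm_cobounded_atTop.eventually_gt_atTop 0] with x hx
  have hle : ‖x‖ ^ finrank ℝ E ≤ (1 + ‖x‖ ^ 2) ^ (finrank ℝ E / 2 : ℝ) := by
    rw [pow_eq_sq_rpow_half (norm_nonneg x)]
    exact Real.rpow_le_rpow (by positivity) (by linarith) (by positivity)
  calc ‖x‖ ^ finrank ℝ E * newtonBump x
      ≤ (1 + ‖x‖ ^ 2) ^ (finrank ℝ E / 2 : ℝ) * newtonBump x := by
        unfold newtonBump; gcongr
    _ = (1 + ‖x‖ ^ 2)⁻¹ := by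
        rw [newtonBump, ← Real.rpow_add (by positivity), ← Real.rpow_neg_one]
        ring_nf
    _ ≤ (‖x‖ ^ 2)⁻¹ := by gcongr; linarith

variable [FiniteDimensional ℝ E]

lemma laplacian_add_norm_sq_rpow (hε : 0 < ε) (p : ℝ) (x : E) :
    Δ (fun y : E ↦ (ε + ‖y‖ ^ 2) ^ p) x =
      4 * p * (p - 1) * (ε + ‖x‖ ^ 2) ^ (p - 2) * ‖x‖ ^ 2 +
        2 * p * finrank ℝ E * (ε + ‖x‖ ^ 2) ^ (p - 1) := by
  let b := stdOrthonormalBasis ℝ E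
  have hnorm : ∑ i, inner ℝ x (b i) ^ 2 = ‖x‖ ^ 2 := b.sum_sq_inner_left x
  simp only [laplacian_eq_sum_fderiv_fderiv (contDiff_add_norm_sq_rpow hε p) b,
    fderiv_fderiv_add_norm_sq_rpow hε, Finset.sum_add_distrib, ← Finset.mul_sum, hnorm,
    b.norm_eq_one, one_pow, Finset.sum_const, Finset.card_univ, Fintype.card_fin, nsmul_eq_mul]
  ring

lemma laplacian_smoothedNewtonKernel (hε : 0 < ε) (x : E) :
    Δ (smoothedNewtonKernel (E := E) ε) x = -(finrank ℝ E * (finrank ℝ E - 2)) *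
      (ε * (ε + ‖x‖ ^ 2) ^ (-1 - finrank ℝ E / 2 : ℝ)) := by
  have hsplit : (ε + ‖x‖ ^ 2) ^ (-(finrank ℝ E / 2) : ℝ) =
      (ε + ‖x‖ ^ 2) ^ (-1 - finrank ℝ E / 2 : ℝ) * (ε + ‖x‖ ^ 2) := by
    rw [← Real.rpow_add_one (by positivity)]
    ring_nf
  unfold smoothedNewtonKernel
  rw [laplacian_add_norm_sq_rpow hε,
    show (1 - finrank ℝ E / 2 : ℝ) - 2 = -1 - finrank ℝ E / 2 by ring,
    show (1 - finrank ℝ E / 2 : ℝ) - 1 = -(finrank ℝ E / 2) by ring, hsplit]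
  ring

end RadialPowers

section FundamentalSolution

lemma integral_Ioi_pow_mul_one_add_sq_rpow {d : ℕ} (hd : d ≠ 0) :
    ∫ y in Set.Ioi (0 : ℝ), y ^ (d - 1) * (1 + y ^ 2) ^ (-1 - d / 2 : ℝ) = 1 / (d : ℝ) := by
  let primitive (y : ℝ) : ℝ := y ^ d * (1 + y ^ 2) ^ (-(d / 2) : ℝ) / d
  have hderiv (y : ℝ) : HasDerivAt primitive (y ^ (d - 1) * (1 + y ^ 2) ^ (-1 - d / 2 : ℝ)) y := by
    have hbase : HasDerivAt (fun y : ℝ ↦ 1 + y ^ 2) (2 * y) y := by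
      simpa using (hasDerivAt_pow 2 y).const_add 1
    have hsplit : (1 + y ^ 2) ^ (-(d / 2) : ℝ) =
        (1 + y ^ 2) ^ (-1 - d / 2 : ℝ) * (1 + y ^ 2) := by
      rw [← Real.rpow_add_one (by positivity)]
      ring_nf
    refine (((hasDerivAt_pow d y).fun_mul (hbase.rpow_const (p := -(d / 2))
      (Or.inl (by positivity)))).div_const d).congr_deriv ?_
    rw [hsplit, show (-(d / 2) - 1 : ℝ) = -1 - d / 2 by ring, ← mul_pow_sub_one hd y]
    field_simp
    ring
  have hlim : Tendsto primitive atTop (𝓝 (1 / (d : ℝ))) := by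
    have hbase : Tendsto (fun y : ℝ ↦ 1 + (y ^ 2)⁻¹) atTop (𝓝 1) := by
      simpa using (tendsto_pow_atTop two_ne_zero).inv_tendsto_atTop.const_add (1 : ℝ)
    have hpow := (hbase.rpow_const (p := -(d / 2)) (Or.inl one_ne_zero)).div_const (d : ℝ)
    rw [Real.one_rpow] at hpow
    refine hpow.congr' ?_
    filter_upwards [eventually_gt_atTop 0] with y hy
    have hfactor : 1 + (y ^ 2)⁻¹ = (1 + y ^ 2) / y ^ 2 := by field_simp; ring
    rw [hfactor, Real.div_rpow (by positivity) (by positivity), Real.rpow_neg (sq_nonneg y),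
      div_inv_eq_mul, ← pow_eq_sq_rpow_half hy.le, mul_comm]
  rw [integral_Ioi_of_hasDerivAt_of_nonneg' (fun y _ ↦ hderiv y)
    (fun y (hy : 0 < y) ↦ by positivity) hlim]
  simp [primitive, hd]

variable {E : Type*} [NormedAddCommGroup E] [InnerProductSpace ℝ E] [MeasurableSpace E]
  [BorelSpace E]

lemma measurable_newtonKernel : Measurable (newtonKernel : E → ℝ) := by
  unfold newtonKernel
  fun_prop

variable [FiniteDimensional ℝ E] (μ : Measure E) [μ.IsAddHaarMeasure]

lemma integral_newtonBump [Nontrivial E] :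
    ∫ x, newtonBump x ∂μ = μ.real (Metric.ball (0 : E) 1) := by
  have hd : finrank ℝ E ≠ 0 := finrank_pos.ne'
  have h := integral_fun_norm_addHaar μ
    fun y : ℝ ↦ (1 + y ^ 2) ^ (-1 - finrank ℝ E / 2 : ℝ)
  simp only [smul_eq_mul, nsmul_eq_mul, integral_Ioi_pow_mul_one_add_sq_rpow hd] at h
  simp only [newtonBump, h]
  field_simp

lemma tendsto_integral_newtonBump_smul_mul [Nontrivial E] {φ : E → ℝ} (hφ : Continuous φ)
    (hφi : Integrable φ μ) :
    Tendsto (fun c : ℝ ↦ ∫ x, c ^ finrank ℝ E * newtonBump (c • x) * φ x ∂μ) atTop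
      (𝓝 (μ.real (Metric.ball (0 : E) 1) * φ 0)) := by
  set V := μ.real (Metric.ball (0 : E) 1)
  have hV : 0 < V := ENNReal.toReal_pos (Metric.measure_ball_pos μ 0 one_pos).ne'
    Metric.isBounded_ball.measure_lt_top.ne
  have hmass : ∫ x, V⁻¹ * newtonBump x ∂μ = 1 := by
    rw [integral_const_mul, integral_newtonBump, inv_mul_cancel₀ hV.ne']
  have hdecay : Tendsto (fun x : E ↦ ‖x‖ ^ finrank ℝ E * (V⁻¹ * newtonBump x))
      (Bornology.cobounded E) (𝓝 0) := by
    simpa [mul_left_comm] using (tendsto_norm_pow_mul_newtonBump (E := E)).const_mul V⁻¹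
  have h := (tendsto_integral_comp_smul_smul_of_integrable
    (fun x ↦ by unfold newtonBump; positivity) hmass hdecay hφi hφ.continuousAt).const_mul V
  refine h.congr fun c ↦ ?_
  rw [← integral_const_mul]
  refine integral_congr_ae (.of_forall fun x ↦ ?_)
  simp only [smul_eq_mul]
  field_simp

lemma locallyIntegrable_newtonKernel [Nontrivial E] :
    LocallyIntegrable (newtonKernel : E → ℝ) μ := by
  refine locallyIntegrable_of_norm_le_rpow (C := 1) (α := finrank ℝ E - 2)
    (Nat.one_le_iff_ne_zero.2 finrank_pos.ne') (by linarith) (.of_forall fun x ↦ ?_)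
    measurable_newtonKernel.aestronglyMeasurable
  rw [newtonKernel, neg_sub, one_mul, Real.norm_of_nonneg (by positivity)]

lemma tendsto_integral_smoothedNewtonKernel_mul (hd : 2 ≤ finrank ℝ E) {ψ : E → ℝ}
    (hψ : Continuous ψ) (hψc : HasCompactSupport ψ) :
    Tendsto (fun ε : ℝ ↦ ∫ x, smoothedNewtonKernel ε x * ψ x ∂μ) (𝓝[>] 0)
      (𝓝 (∫ x, newtonKernel x * ψ x ∂μ)) := by
  have : Nontrivial E := nontrivial_of_finrank_pos (R := ℝ) (by lia)
  have hne : ∀ᵐ x ∂μ, x ≠ 0 := Measure.ae_ne μ 0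
  refine tendsto_integral_filter_of_dominated_convergence (fun x ↦ ‖newtonKernel x * ψ x‖) ?_ ?_
    ((locallyIntegrable_newtonKernel μ).integrable_smul_right_of_hasCompactSupport hψ hψc).norm ?_
  · filter_upwards [self_mem_nhdsWithin] with ε hε
    exact ((contDiff_smoothedNewtonKernel (n := 0) hε).continuous.mul hψ).aestronglyMeasurable
  · filter_upwards [self_mem_nhdsWithin] with ε (hε : 0 < ε)
    filter_upwards [hne] with x hx
    have hnonneg : 0 ≤ smoothedNewtonKernel ε x := by unfold smoothedNewtonKernel; positivity
    rw [norm_mul, norm_mul]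
    gcongr
    rw [Real.norm_of_nonneg hnonneg]
    exact (smoothedNewtonKernel_le_newtonKernel hd hε.le hx).trans (le_abs_self _)
  · filter_upwards [hne] with x hx
    refine Tendsto.mul_const _ ?_
    have hbase : Tendsto (fun ε : ℝ ↦ ε + ‖x‖ ^ 2) (𝓝[>] 0) (𝓝 (‖x‖ ^ 2)) := by
      have hcont : Continuous fun ε : ℝ ↦ ε + ‖x‖ ^ 2 := by fun_prop
      simpa using (hcont.tendsto 0).mono_left nhdsWithin_le_nhds
    rw [newtonKernel_eq_sq_rpow]
    exact hbase.rpow_const (Or.inl (by positivity))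

theorem integral_newtonKernel_mul_laplacian (hd : 2 ≤ finrank ℝ E) {φ : E → ℝ}
    (hφ : ContDiff ℝ 2 φ) (hφc : HasCompactSupport φ) :
    ∫ x, newtonKernel x * Δ φ x ∂μ =
      -(finrank ℝ E * (finrank ℝ E - 2)) * (μ.real (Metric.ball (0 : E) 1) * φ 0) := by
  have : Nontrivial E := nontrivial_of_finrank_pos (R := ℝ) (by lia)
  have hscale : Tendsto (fun c : ℝ ↦ (c ^ 2)⁻¹) atTop (𝓝[>] 0) :=
    tendsto_inv_atTop_nhdsGT_zero.comp (tendsto_pow_atTop two_ne_zero)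
  have hkernel := (tendsto_integral_smoothedNewtonKernel_mul μ hd (continuous_laplacian hφ)
    (hasCompactSupport_laplacian hφc)).comp hscale
  have hbump := (tendsto_integral_newtonBump_smul_mul μ hφ.continuous
    (hφ.continuous.integrable_of_hasCompactSupport hφc)).const_mul
      (-(finrank ℝ E * (finrank ℝ E - 2) : ℝ))
  refine tendsto_nhds_unique (hkernel.congr' ?_) hbump
  filter_upwards [eventually_gt_atTop 0] with c hc
  have hε : 0 < (c ^ 2)⁻¹ := by positivity
  rw [Function.comp_apply, integral_mul_laplacian μ (contDiff_smoothedNewtonKernel hε) hφ hφc,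
    ← integral_const_mul]
  refine integral_congr_ae (.of_forall fun x ↦ ?_)
  simp only [laplacian_smoothedNewtonKernel hε, pow_finrank_mul_newtonBump_smul hc, mul_assoc]

theorem integral_newtonKernel_sub_mul_laplacian (hd : 2 ≤ finrank ℝ E) {φ : E → ℝ}
    (hφ : ContDiff ℝ 2 φ) (hφc : HasCompactSupport φ) (a : E) :
    ∫ x, newtonKernel (x - a) * Δ φ x ∂μ =
      -(finrank ℝ E * (finrank ℝ E - 2)) * (μ.real (Metric.ball (0 : E) 1) * φ a) := by
  have h := integral_newtonKernel_mul_laplacian μ hd (φ := fun x ↦ φ (x + a))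
    (hφ.comp (contDiff_id.add contDiff_const))
    (hφc.comp_homeomorph (Homeomorph.addRight a))
  rw [zero_add] at h
  rw [← h, ← integral_add_right_eq_self _ a]
  simp only [laplacian_comp_add_right, add_sub_cancel_right]

end FundamentalSolution

section Shear

variable {E : Type*} [NormedAddCommGroup E] [NormedSpace ℝ E] [FiniteDimensional ℝ E]
  [MeasurableSpace E] [BorelSpace E] (μ : Measure E) [μ.IsAddHaarMeasure]

lemma measurePreserving_prod_sub_smul (v : E) :
    MeasurePreserving (fun p : ℝ × E ↦ (p.1, p.2 - p.1 • v)) (volume.prod μ) (volume.prod μ) :=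
  (MeasurePreserving.id volume).skew_product (by fun_prop)
    (.of_forall fun t ↦ map_sub_right_eq_self μ (t • v))

lemma integrableOn_comp_sub_smul_Ioc_prod_ball {F : Type*} [NormedAddCommGroup F] {f : E → F}
    (hf : LocallyIntegrable f μ) (v : E) (T R : ℝ) :
    IntegrableOn (fun p : ℝ × E ↦ f (p.2 - p.1 • v)) (Set.Ioc 0 T ×ˢ Metric.ball 0 R)
      (volume.prod μ) := by
  let s := Set.Ioc 0 T ×ˢ Metric.ball (0 : E) (R + T * ‖v‖)
  have hs : MeasurableSet s := measurableSet_Ioc.prod measurableSet_ball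
  have hsnd : IntegrableOn (fun p : ℝ × E ↦ f p.2) s (volume.prod μ) := by
    have hball : IntegrableOn f (Metric.ball 0 (R + T * ‖v‖)) μ :=
      (hf.integrableOn_isCompact (isCompact_closedBall 0 _)).mono_set Metric.ball_subset_closedBall
    rw [IntegrableOn, ← Measure.prod_restrict]
    exact hball.comp_snd (volume.restrict (Set.Ioc 0 T))
  refine IntegrableOn.mono_set (((measurePreserving_prod_sub_smul μ v).restrict_preimage
    hs).integrable_comp_of_integrable hsnd) ?_
  rintro ⟨t, x⟩ ⟨ht, hx⟩
  refine ⟨ht, mem_ball_zero_iff.2 ((norm_sub_le _ _).trans_lt ?_)⟩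
  rw [norm_smul, Real.norm_of_nonneg ht.1.le]
  exact add_lt_add_of_lt_of_le (mem_ball_zero_iff.1 hx)
    (mul_le_mul_of_nonneg_right ht.2 (norm_nonneg v))

end Shear

section RayPotential

variable {E : Type*} [NormedAddCommGroup E] [InnerProductSpace ℝ E]

/-- The Newtonian potential of the half-line spanned by `v`, with unit density in the parameter `t`
of `t • v`. Where the integral diverges it is the junk value `0`. -/
noncomputable def rayPotential (v x : E) : ℝ := ∫ t in Set.Ioi (0 : ℝ), newtonKernel (x - t • v)

lemma newtonKernel_sub_smul_le (hd : 2 ≤ finrank ℝ E) {v x : E} {t : ℝ} (ht : 0 < t)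
    (hv : v ≠ 0) (hx : ‖x‖ ≤ t * ‖v‖ / 2) :
    newtonKernel (x - t • v) ≤ (‖v‖ / 2) ^ (2 - finrank ℝ E : ℝ) * t ^ (2 - finrank ℝ E : ℝ) := by
  have hd' : (2 : ℝ) ≤ finrank ℝ E := mod_cast hd
  have hfar : ‖v‖ / 2 * t ≤ ‖x - t • v‖ := by
    have hreverse := norm_sub_norm_le (t • v) x
    rw [norm_smul, Real.norm_of_nonneg ht.le, norm_sub_rev] at hreverse
    linarith
  rw [← Real.mul_rpow (by positivity) ht.le]
  exact Real.rpow_le_rpow_of_nonpos (by positivity) hfar (by linarith)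

variable [FiniteDimensional ℝ E] [MeasurableSpace E] [BorelSpace E]
  (μ : Measure E) [μ.IsAddHaarMeasure]

lemma integrableOn_newtonKernel_sub_smul_Ioi_prod_ball (hd : 4 ≤ finrank ℝ E) {v : E} (hv : v ≠ 0)
    {R : ℝ} (hR : 0 < R) :
    IntegrableOn (fun p : ℝ × E ↦ newtonKernel (p.2 - p.1 • v))
      (Set.Ioi (2 * R / ‖v‖) ×ˢ Metric.ball 0 R) (volume.prod μ) := by
  have hd' : (4 : ℝ) ≤ finrank ℝ E := mod_cast hd
  have hT : 0 < 2 * R / ‖v‖ := by positivity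
  have : IsFiniteMeasure (μ.restrict (Metric.ball 0 R)) :=
    isFiniteMeasure_restrict.2 Metric.isBounded_ball.measure_lt_top.ne
  have hdom : IntegrableOn
      (fun p : ℝ × E ↦ (‖v‖ / 2) ^ (2 - finrank ℝ E : ℝ) * p.1 ^ (2 - finrank ℝ E : ℝ))
      (Set.Ioi (2 * R / ‖v‖) ×ˢ Metric.ball 0 R) (volume.prod μ) := by
    rw [IntegrableOn, ← Measure.prod_restrict]
    exact ((integrableOn_Ioi_rpow_of_lt (by linarith) hT).const_mul _).comp_fst
      (μ.restrict (Metric.ball 0 R))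
  refine hdom.mono' (measurable_newtonKernel.comp (by fun_prop)).aestronglyMeasurable ?_
  refine ae_restrict_of_forall_mem (measurableSet_Ioi.prod measurableSet_ball) ?_
  rintro ⟨t, x⟩ ⟨ht : 2 * R / ‖v‖ < t, hx⟩
  have hx' : ‖x‖ < R := mem_ball_zero_iff.1 hx
  have htv : 2 * R < t * ‖v‖ := (div_lt_iff₀ (norm_pos_iff.2 hv)).1 ht
  rw [Real.norm_of_nonneg (by unfold newtonKernel; positivity)]
  exact newtonKernel_sub_smul_le (by lia) (hT.trans ht) hv (by linarith)

lemma integrable_newtonKernel_sub_smul_prod_restrict (hd : 4 ≤ finrank ℝ E) {v : E} (hv : v ≠ 0)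
    {K : Set E} (hK : Bornology.IsBounded K) :
    Integrable (fun p : ℝ × E ↦ newtonKernel (p.2 - p.1 • v))
      ((volume.restrict (Set.Ioi 0)).prod (μ.restrict K)) := by
  have : Nontrivial E := nontrivial_of_ne v 0 hv
  obtain ⟨R, hR, hKR⟩ := hK.subset_ball_lt 0 0
  have hT : 0 ≤ 2 * R / ‖v‖ := by positivity
  rw [Measure.prod_restrict, ← Set.Ioc_union_Ioi_eq_Ioi hT, Set.union_prod]
  exact ((integrableOn_comp_sub_smul_Ioc_prod_ball μ (locallyIntegrable_newtonKernel μ) v _ R).union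
    (integrableOn_newtonKernel_sub_smul_Ioi_prod_ball μ hd hv hR)).mono_set
      (Set.union_subset_union (Set.prod_mono_right hKR) (Set.prod_mono_right hKR))

lemma locallyIntegrable_rayPotential (hd : 4 ≤ finrank ℝ E) {v : E} (hv : v ≠ 0) :
    LocallyIntegrable (rayPotential v) μ :=
  locallyIntegrable_iff.2 fun _ hK ↦
    (integrable_newtonKernel_sub_smul_prod_restrict μ hd hv hK.isBounded).integral_prod_right

lemma integrable_newtonKernel_sub_smul_mul (hd : 4 ≤ finrank ℝ E) {v : E} (hv : v ≠ 0) {ψ : E → ℝ}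
    (hψ : Continuous ψ) (hψc : HasCompactSupport ψ) :
    Integrable (fun p : ℝ × E ↦ newtonKernel (p.2 - p.1 • v) * ψ p.2)
      ((volume.restrict (Set.Ioi 0)).prod μ) := by
  obtain ⟨C, hC⟩ := hψc.exists_bound_of_continuous hψ
  have hkernel :=
    integrable_newtonKernel_sub_smul_prod_restrict μ hd hv hψc.isCompact.isBounded
  have hrestrict := hkernel.mul_bdd (g := fun p ↦ ψ p.2) (c := C)
    (hψ.comp continuous_snd).aestronglyMeasurable (.of_forall fun p ↦ hC p.2)
  rw [← Measure.restrict_univ (μ := volume.restrict (Set.Ioi 0)),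
    Measure.prod_restrict] at hrestrict
  refine (integrableOn_iff_integrable_of_support_subset fun p hp ↦ ?_).1 hrestrict
  exact ⟨Set.mem_univ _, subset_tsupport ψ (right_ne_zero_of_mul hp)⟩

theorem integral_rayPotential_mul_laplacian (hd : 4 ≤ finrank ℝ E) {v : E} (hv : v ≠ 0) {φ : E → ℝ}
    (hφ : ContDiff ℝ 2 φ) (hφc : HasCompactSupport φ) :
    ∫ x, rayPotential v x * Δ φ x ∂μ =
      -(finrank ℝ E * (finrank ℝ E - 2) * μ.real (Metric.ball (0 : E) 1)) *
        ∫ t in Set.Ioi (0 : ℝ), φ (t • v) := by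
  calc ∫ x, rayPotential v x * Δ φ x ∂μ
      = ∫ x, (∫ t in Set.Ioi (0 : ℝ), newtonKernel (x - t • v) * Δ φ x) ∂μ := by
        simp only [rayPotential, integral_mul_const]
    _ = ∫ t in Set.Ioi (0 : ℝ), ∫ x, newtonKernel (x - t • v) * Δ φ x ∂μ :=
        (integral_integral_swap (integrable_newtonKernel_sub_smul_mul μ hd hv
          (continuous_laplacian hφ) (hasCompactSupport_laplacian hφc))).symm
    _ = _ := by
        simp only [integral_newtonKernel_sub_mul_laplacian μ (by lia : 2 ≤ finrank ℝ E) hφ hφc,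
          integral_const_mul]
        ring

end RayPotential

lemma integral_Ioi_inv_sub_sq_add_sq {ρ : ℝ} (hρ : 0 < ρ) (h : ℝ) :
    ∫ t in Set.Ioi (0 : ℝ), ((t - h) ^ 2 + ρ ^ 2)⁻¹ =
      ρ⁻¹ * (Real.pi / 2 + Real.arctan (h / ρ)) := by
  have hderiv (t : ℝ) :
      HasDerivAt (fun t ↦ ρ⁻¹ * Real.arctan ((t - h) / ρ)) ((t - h) ^ 2 + ρ ^ 2)⁻¹ t := by
    refine ((((hasDerivAt_id t).sub_const h).div_const ρ).arctan.const_mul ρ⁻¹).congr_deriv ?_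
    simp only [id]
    field_simp
    ring
  have hlim : Tendsto (fun t ↦ ρ⁻¹ * Real.arctan ((t - h) / ρ)) atTop (𝓝 (ρ⁻¹ * (Real.pi / 2))) :=
    ((Real.tendsto_arctan_atTop.mono_right nhdsWithin_le_nhds).comp
      ((tendsto_atTop_add_const_right _ (-h) tendsto_id).atTop_div_const hρ)).const_mul ρ⁻¹
  rw [integral_Ioi_of_hasDerivAt_of_nonneg' (fun t _ ↦ hderiv t) (fun t _ ↦ by positivity) hlim,
    zero_sub, neg_div, Real.arctan_neg]
  ring

section Coordinates

variable {a11 a12 a22 : ℝ}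

lemma a22_pos_of_det_pos (ha11 : 0 < a11) (hA : 0 < a11 * a22 - a12 ^ 2) : 0 < a22 :=
  pos_of_mul_pos_right (by nlinarith [sq_nonneg a12]) ha11.le

/-- The linear change of variables under which the operator
`a₂₂ ∂²/∂μ₁² - 2 a₁₂ ∂²/∂μ₁∂μ₂ + a₁₁ ∂²/∂μ₂² + ∂²/∂x² + ∂²/∂y²` becomes the Laplacian of `ℝ⁴`. -/
noncomputable def normalizingMatrix (a11 a12 a22 : ℝ) : Matrix (Fin 4) (Fin 4) ℝ :=
  !![1 / √a22, 0, 0, 0;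
     a12 / (√(a11 * a22 - a12 ^ 2) * √a22), √a22 / √(a11 * a22 - a12 ^ 2), 0, 0;
     0, 0, 1, 0;
     0, 0, 0, 1]

/-- The inverse of `normalizingMatrix`; its columns are the frame whose second derivatives add up to
the operator. -/
noncomputable def normalizingFrame (a11 a12 a22 : ℝ) : Matrix (Fin 4) (Fin 4) ℝ :=
  !![√a22, 0, 0, 0;
     -a12 / √a22, √(a11 * a22 - a12 ^ 2) / √a22, 0, 0;
     0, 0, 1, 0;
     0, 0, 0, 1]

lemma normalizingMatrix_mul_normalizingFrame (ha22 : 0 < a22) (hA : 0 < a11 * a22 - a12 ^ 2) :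
    normalizingMatrix a11 a12 a22 * normalizingFrame a11 a12 a22 = 1 := by
  have hs := (Real.sqrt_pos.2 hA).ne'
  have hr := (Real.sqrt_pos.2 ha22).ne'
  ext i j
  fin_cases i <;> fin_cases j <;>
    simp [normalizingMatrix, normalizingFrame, Matrix.mul_apply, Fin.sum_univ_four, hs, hr]
  field_simp
  ring

lemma det_normalizingMatrix (ha22 : 0 < a22) :
    (normalizingMatrix a11 a12 a22).det = (√(a11 * a22 - a12 ^ 2))⁻¹ := by
  have hr := (Real.sqrt_pos.2 ha22).ne'
  have hlower : (normalizingMatrix a11 a12 a22).IsLowerTriangular := by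
    intro i j (hij : i < j)
    fin_cases i <;> fin_cases j <;> simp_all [normalizingMatrix]
  rw [Matrix.det_of_isLowerTriangular _ hlower, Fin.prod_univ_four]
  simp only [normalizingMatrix, Matrix.of_apply, Matrix.cons_val]
  field_simp

/-- `normalizingMatrix` as a continuous linear equivalence onto Euclidean space. -/
noncomputable def normalizingEquiv (ha22 : 0 < a22) (hA : 0 < a11 * a22 - a12 ^ 2) :
    (Fin 4 → ℝ) ≃L[ℝ] EuclideanSpace ℝ (Fin 4) :=
  (Matrix.toLin'OfInv
    (mul_eq_one_comm.1 (normalizingMatrix_mul_normalizingFrame ha22 hA))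
    (normalizingMatrix_mul_normalizingFrame ha22 hA)).toContinuousLinearEquiv.trans
      (EuclideanSpace.equiv (Fin 4) ℝ).symm

variable (ha22 : 0 < a22) (hA : 0 < a11 * a22 - a12 ^ 2)

lemma normalizingEquiv_apply (x : Fin 4 → ℝ) :
    normalizingEquiv ha22 hA x = WithLp.toLp 2 (normalizingMatrix a11 a12 a22 *ᵥ x) := rfl

lemma normalizingEquiv_symm_basisFun (i : Fin 4) :
    (normalizingEquiv ha22 hA).symm (EuclideanSpace.basisFun (Fin 4) ℝ i) =
      (normalizingFrame a11 a12 a22).col i := by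
  rw [EuclideanSpace.basisFun_apply, ← Matrix.mulVec_single_one]
  rfl

lemma norm_normalizingEquiv_sq (x : Fin 4 → ℝ) :
    ‖normalizingEquiv ha22 hA x‖ ^ 2 =
      a22 / (a11 * a22 - a12 ^ 2) * (x 1 + a12 * x 0 / a22) ^ 2 +
        (x 0 ^ 2 + a22 * (x 2 ^ 2 + x 3 ^ 2)) / a22 := by
  have hcoord : normalizingMatrix a11 a12 a22 *ᵥ x =
      ![x 0 / √a22,
        √a22 / √(a11 * a22 - a12 ^ 2) * (x 1 + a12 * x 0 / √a22 ^ 2), x 2, x 3] := by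
    ext i
    fin_cases i <;> simp [normalizingMatrix, Matrix.mulVec, dotProduct, Fin.sum_univ_four]
    · ring
    · field_simp
      ring
  rw [normalizingEquiv_apply, EuclideanSpace.real_norm_sq_eq, Fin.sum_univ_four, hcoord]
  simp only [Matrix.cons_val, mul_pow, div_pow, Real.sq_sqrt hA.le, Real.sq_sqrt ha22.le]
  field_simp
  ring

lemma laplacian_comp_normalizingEquiv_symm {φ : (Fin 4 → ℝ) → ℝ} (hφ : ContDiff ℝ 2 φ)
    (x : Fin 4 → ℝ) :
    Δ (φ ∘ (normalizingEquiv ha22 hA).symm) (normalizingEquiv ha22 hA x) =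
      a22 * pder 0 (pder 0 φ) x - 2 * a12 * pder 0 (pder 1 φ) x + a11 * pder 1 (pder 1 φ) x +
        pder 2 (pder 2 φ) x + pder 3 (pder 3 φ) x := by
  let e (i : Fin 4) : Fin 4 → ℝ := Pi.single i 1
  let B (v w : Fin 4 → ℝ) : ℝ := fderiv ℝ (fderiv ℝ φ) x v w
  have hpder (i j : Fin 4) : pder i (pder j φ) x = B (e i) (e j) :=
    fderiv_fderiv_apply hφ x (e j) (e i)
  have hsymm : B (e 1) (e 0) = B (e 0) (e 1) :=
    hφ.contDiffAt.isSymmSndFDerivAt (by simp) (e 1) (e 0)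
  have hcol (i : Fin 4) : (normalizingFrame a11 a12 a22).col i =
      ![√a22 • e 0 + (-a12 / √a22) • e 1, (√(a11 * a22 - a12 ^ 2) / √a22) • e 1, e 2, e 3] i := by
    ext j
    fin_cases i <;> fin_cases j <;> simp [normalizingFrame, e]
  have hlaplacian := laplacian_comp_clm hφ ((normalizingEquiv ha22 hA).symm : _ →L[ℝ] _)
    (EuclideanSpace.basisFun (Fin 4) ℝ) (normalizingEquiv ha22 hA x)
  simp only [ContinuousLinearEquiv.coe_coe, ContinuousLinearEquiv.symm_apply_apply,
    normalizingEquiv_symm_basisFun, Fin.sum_univ_four, hcol, Matrix.cons_val, map_add,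
    map_smul, add_apply, smul_apply, smul_eq_mul] at hlaplacian
  have h00 : √a22 ^ 2 = a22 := Real.sq_sqrt ha22.le
  have h01 : √a22 * (-a12 / √a22) = -a12 := mul_div_cancel₀ _ (Real.sqrt_pos.2 ha22).ne'
  have h11 : (-a12 / √a22) ^ 2 + (√(a11 * a22 - a12 ^ 2) / √a22) ^ 2 = a11 := by
    rw [div_pow, div_pow, Real.sq_sqrt ha22.le, Real.sq_sqrt hA.le]
    field_simp
    ring
  rw [hlaplacian, hpder, hpder, hpder, hpder, hpder]
  linear_combination √a22 * (-a12 / √a22) * hsymm + B (e 0) (e 0) * h00 +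
    2 * B (e 0) (e 1) * h01 + B (e 1) (e 1) * h11

lemma map_normalizingEquiv_volume :
    volume.map (normalizingEquiv ha22 hA) =
      ENNReal.ofReal √(a11 * a22 - a12 ^ 2) • (volume : Measure (EuclideanSpace ℝ (Fin 4))) := by
  have hdet := det_normalizingMatrix (a11 := a11) (a12 := a12) ha22
  have hs := Real.sqrt_pos.2 hA
  have hmatrix := Real.map_matrix_volume_pi_eq_smul_volume_pi
    (M := normalizingMatrix a11 a12 a22) (by rw [hdet]; positivity)
  rw [hdet, inv_inv, abs_of_pos hs] at hmatrix
  rw [← (PiLp.volume_preserving_toLp (Fin 4)).map_eq, ← Measure.map_smul, ← hmatrix,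
    Measure.map_map (by fun_prop) (by fun_prop)]
  rfl

lemma measureReal_map_normalizingEquiv_ball :
    (volume.map (normalizingEquiv ha22 hA)).real (Metric.ball 0 1) =
      √(a11 * a22 - a12 ^ 2) * (Real.pi ^ 2 / 2) := by
  rw [map_normalizingEquiv_volume, measureReal_ennreal_smul_apply,
    ENNReal.toReal_ofReal (Real.sqrt_nonneg _), Measure.real,
    InnerProductSpace.volume_ball_of_dim_even (k := 2) (by simp)]
  simp [ENNReal.toReal_ofReal (by positivity : 0 ≤ Real.pi ^ 2 / 2)]

end Coordinates

section AlphaOne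

variable {a11 a12 a22 : ℝ} (ha22 : 0 < a22) (hA : 0 < a11 * a22 - a12 ^ 2)

lemma newtonKernel_normalizingEquiv_sub_smul (x : Fin 4 → ℝ) (t : ℝ) :
    newtonKernel (normalizingEquiv ha22 hA x - t • normalizingEquiv ha22 hA (Pi.single 1 1)) =
      (a11 * a22 - a12 ^ 2) / a22 * ((t - (x 1 + a12 * x 0 / a22)) ^ 2 +
        (√(a11 * a22 - a12 ^ 2) * √(x 0 ^ 2 + a22 * (x 2 ^ 2 + x 3 ^ 2)) / a22) ^ 2)⁻¹ := by
  have hA_ne : a11 * a22 - a12 ^ 2 ≠ 0 := hA.ne'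
  have hdim : (2 - finrank ℝ (EuclideanSpace ℝ (Fin 4)) : ℝ) = -(2 : ℕ) := by norm_num
  have hshift : (x - t • Pi.single 1 1 : Fin 4 → ℝ) = ![x 0, x 1 - t, x 2, x 3] := by
    ext i
    fin_cases i <;> simp
  have hnorm : ‖normalizingEquiv ha22 hA (x - t • Pi.single 1 1)‖ ^ 2 =
      a22 / (a11 * a22 - a12 ^ 2) * ((t - (x 1 + a12 * x 0 / a22)) ^ 2 +
        (√(a11 * a22 - a12 ^ 2) * √(x 0 ^ 2 + a22 * (x 2 ^ 2 + x 3 ^ 2)) / a22) ^ 2) := by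
    rw [norm_normalizingEquiv_sq, hshift, div_pow, mul_pow, Real.sq_sqrt hA.le,
      Real.sq_sqrt (by positivity)]
    simp only [Matrix.cons_val]
    generalize a11 * a22 - a12 ^ 2 = A at hA_ne ⊢
    field_simp
    ring
  rw [← map_smul, ← map_sub, newtonKernel, hdim, Real.rpow_neg (norm_nonneg _), Real.rpow_natCast,
    hnorm, mul_inv, inv_div]

lemma rayPotential_normalizingEquiv {x : Fin 4 → ℝ} (hx : x 0 ≠ 0) :
    rayPotential (normalizingEquiv ha22 hA (Pi.single 1 1)) (normalizingEquiv ha22 hA x) =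
      2 * Real.pi * √(a11 * a22 - a12 ^ 2) * alpha1R4 a11 a12 a22 x := by
  simp only [rayPotential, newtonKernel_normalizingEquiv_sub_smul, integral_const_mul]
  have harctan : (x 1 + a12 * x 0 / a22) / (√(a11 * a22 - a12 ^ 2) *
      √(x 0 ^ 2 + a22 * (x 2 ^ 2 + x 3 ^ 2)) / a22) =
      (a22 * x 1 + a12 * x 0) / (√(a11 * a22 - a12 ^ 2) *
        √(x 0 ^ 2 + a22 * (x 2 ^ 2 + x 3 ^ 2))) := by
    field_simp
  rw [integral_Ioi_inv_sub_sq_add_sq (by positivity), harctan, alpha1R4, alpha1,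
    Complex.normSq_add_mul_I]
  field_simp
  rw [Real.sq_sqrt hA.le]

lemma alpha1R4_ae_eq :
    alpha1R4 a11 a12 a22 =ᵐ[volume] fun x ↦ (2 * Real.pi * √(a11 * a22 - a12 ^ 2))⁻¹ *
      rayPotential (normalizingEquiv ha22 hA (Pi.single 1 1)) (normalizingEquiv ha22 hA x) := by
  have hne : 2 * Real.pi * √(a11 * a22 - a12 ^ 2) ≠ 0 := by positivity
  filter_upwards [Measure.ae_eval_ne (fun _ ↦ volume) 0 0] with x hx
  rw [rayPotential_normalizingEquiv ha22 hA hx, inv_mul_cancel_left₀ hne]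

lemma integral_alpha1R4_mul_comp_normalizingEquiv (g : EuclideanSpace ℝ (Fin 4) → ℝ) :
    ∫ x, alpha1R4 a11 a12 a22 x * g (normalizingEquiv ha22 hA x) =
      (2 * Real.pi * √(a11 * a22 - a12 ^ 2))⁻¹ *
        ∫ y, rayPotential (normalizingEquiv ha22 hA (Pi.single 1 1)) y * g y
          ∂volume.map (normalizingEquiv ha22 hA) := by
  have hmap := (normalizingEquiv ha22 hA).toHomeomorph.measurableEmbedding.integral_map
    (μ := volume) fun y ↦ rayPotential (normalizingEquiv ha22 hA (Pi.single 1 1)) y * g y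
  simp only [ContinuousLinearEquiv.coe_toHomeomorph] at hmap
  rw [hmap, ← integral_const_mul]
  refine integral_congr_ae ?_
  filter_upwards [alpha1R4_ae_eq ha22 hA] with x hx
  rw [hx, mul_assoc]

end AlphaOne

theorem locallyIntegrable_alpha1R4 {a11 a12 a22 : ℝ} (ha11 : 0 < a11)
    (hA : 0 < a11 * a22 - a12 ^ 2) : LocallyIntegrable (alpha1R4 a11 a12 a22) volume := by
  have ha22 := a22_pos_of_det_pos ha11 hA
  let S := normalizingEquiv ha22 hA
  have hv : S (Pi.single 1 1) ≠ 0 := by simp [S]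
  have hray := (locallyIntegrable_map_homeomorph S.toHomeomorph).1
    (locallyIntegrable_rayPotential (volume.map S) (by simp) hv)
  exact (hray.smul (2 * Real.pi * √(a11 * a22 - a12 ^ 2))⁻¹).congr (alpha1R4_ae_eq ha22 hA).symm

theorem statement1_general (a11 a12 a22 : ℝ) (ha11 : 0 < a11) (hA : 0 < a11 * a22 - a12 ^ 2) :
    LocallyIntegrable (alpha1R4 a11 a12 a22) volume ∧
    ∀ φ : (Fin 4 → ℝ) → ℝ, ContDiff ℝ 2 φ → HasCompactSupport φ →
      (∫ x, alpha1R4 a11 a12 a22 x *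
        (a22 * pder 0 (pder 0 φ) x - 2 * a12 * pder 0 (pder 1 φ) x
          + a11 * pder 1 (pder 1 φ) x + pder 2 (pder 2 φ) x + pder 3 (pder 3 φ) x))
      = -(2 * Real.pi) * ∫ s in Set.Ioi (0 : ℝ), φ ![0, s, 0, 0] := by
  refine ⟨locallyIntegrable_alpha1R4 ha11 hA, fun φ hφ hφc ↦ ?_⟩
  have ha22 := a22_pos_of_det_pos ha11 hA
  let S := normalizingEquiv ha22 hA
  have hv : S (Pi.single 1 1) ≠ 0 := by simp [S]
  have hray (t : ℝ) : S.symm (t • S (Pi.single 1 1)) = ![0, t, 0, 0] := by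
    rw [map_smul, S.symm_apply_apply]
    ext i
    fin_cases i <;> simp
  have hs : √(a11 * a22 - a12 ^ 2) ≠ 0 := (Real.sqrt_pos.2 hA).ne'
  simp only [← laplacian_comp_normalizingEquiv_symm ha22 hA hφ]
  rw [integral_alpha1R4_mul_comp_normalizingEquiv,
    integral_rayPotential_mul_laplacian _ (by simp) hv (hφ.comp S.symm.contDiff)
      (hφc.comp_homeomorph S.symm.toHomeomorph),
    measureReal_map_normalizingEquiv_ball]
  simp only [Function.comp_apply, hray, finrank_euclideanSpace_fin]
  push_cast
  field_simp
  ring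

/-- `α₁` is locally integrable on `ℝ⁴`, and satisfies in the weak
(distributional) sense the equation `(Δ_a α₁) dVol_a = −2π√A ∫_{𝔇₁} dμ₂`. -/
theorem statement1 (a11 a12 a22 : ℝ) (ha11 : 0 < a11) (hA : 0 < a11 * a22 - a12 ^ 2) :
    LocallyIntegrable (alpha1R4 a11 a12 a22) volume ∧
    ∀ φ : (Fin 4 → ℝ) → ℝ, ContDiff ℝ (⊤ : ℕ∞) φ → HasCompactSupport φ →
      (∫ x, alpha1R4 a11 a12 a22 x *
        (a22 * pder 0 (pder 0 φ) x - 2 * a12 * pder 0 (pder 1 φ) x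
          + a11 * pder 1 (pder 1 φ) x + pder 2 (pder 2 φ) x + pder 3 (pder 3 φ) x))
      = -(2 * Real.pi) * ∫ s in Set.Ioi (0 : ℝ), φ ![0, s, 0, 0] := by
  obtain ⟨hloc, hweak⟩ := statement1_general a11 a12 a22 ha11 hA
  exact ⟨hloc, fun φ hφ ↦ hweak φ (contDiff_infty.1 hφ 2)⟩
end

section
/- For every C₀ ≥ 1 there is a constant C > 0 with the following property. Let a = (a_{ij}) be a real symmetric positive definite 2×2 matrix with A = det a ≥ 1 which is C₀-elliptic. Then for every (μ₁, μ₂) ∈ ℝ² and η = x + iy ∈ ℂ with μ₁² + x² + y² > 0 and |x| ≤ 1/2, the series defining α̃₁(μ₁, μ₂, η) converges absolutely and |α̃₁(μ₁, μ₂, η) − α₁(μ₁, μ₂, η)| ≤ C·A^{−1/4}·log(1 + A^{−1/2}|μ⃗|_a), where |μ⃗|_a = √(a₁₁μ₁² + 2a₁₂μ₁μ₂ + a₂₂μ₂² + A|η|²). -/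
/-- The `n`-th term (`n ≠ 0`) of the series defining `α̃₁ − α₁`. -/
noncomputable def alpha1Term (a11 a12 a22 μ1 μ2 : ℝ) (η : ℂ) (n : ℤ) : ℝ :=
  if n = 0 then 0
  else alpha1 a11 a12 a22 μ1 μ2 (η + (n : ℂ)) - 1 / (4 * |(n : ℝ)| * Real.sqrt a22)

/-- `C₀`-ellipticity of the symmetric matrix `(a_{ij})` (scale invariant uniform
ellipticity bound). -/
def IsElliptic (C₀ a11 a12 a22 : ℝ) : Prop :=
  ∀ v1 v2 : ℝ,
    C₀⁻¹ * Real.sqrt (a11 * a22 - a12 ^ 2) * (v1 ^ 2 + v2 ^ 2)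
        ≤ a11 * v1 ^ 2 + 2 * a12 * v1 * v2 + a22 * v2 ^ 2 ∧
      a11 * v1 ^ 2 + 2 * a12 * v1 * v2 + a22 * v2 ^ 2
        ≤ C₀ * Real.sqrt (a11 * a22 - a12 ^ 2) * (v1 ^ 2 + v2 ^ 2)

/-!
The linear substitution `(μ₁, μ₂) ↦ (μ₁ / √a₂₂, (a₂₂ μ₂ + a₁₂ μ₁) / √(A a₂₂))`, with `η` kept fixed,
diagonalizes the quadratic form: it turns `α₁` into `1 / √a₂₂` times the `α₁` of the identity
matrix, and `A ^ (-1/2) |μ⃗|_a` into the Euclidean length `M` of the new vector. For the identity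
matrix, put `r = √(μ₁² + |η + n|²)`. Since `|r - |n|| ≤ M` and `r ≥ |n| / 2`, the `n`-th term is
both `O(1 / |n|)` and `O(M / n²)`, hence `O(M / (|n| (|n| + M)))`, and telescoping
`log (1 + M / n)` bounds the sum of these by `O(log (1 + M))`. Ellipticity finally gives
`1 / √a₂₂ ≤ √C₀ A ^ (-1/4)`.
-/

section ScalarEstimates

lemma abs_arctan_le_abs (x : ℝ) : |Real.arctan x| ≤ |x| := by
  wlog hx : 0 ≤ x generalizing x
  · simpa only [Real.arctan_neg, abs_neg] using this (-x) (by linarith)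
  rw [abs_of_nonneg hx, abs_of_nonneg (Real.arctan_nonneg.2 hx)]
  simpa only [Real.tan_arctan] using
    Real.le_tan (Real.arctan_nonneg.2 hx) (Real.arctan_lt_pi_div_two x)

lemma abs_arctan_le_pi_div_two (x : ℝ) : |Real.arctan x| ≤ Real.pi / 2 :=
  abs_le.2 ⟨(Real.neg_pi_div_two_lt_arctan x).le, (Real.arctan_lt_pi_div_two x).le⟩

lemma le_mul_div_mul_add_of_mul_le {t N M c d : ℝ} (hN : 0 < N) (hM : 0 ≤ M)
    (hc : t * N ≤ c) (hd : t * N ^ 2 ≤ d * M) : t ≤ (c + d) * (M / (N * (N + M))) := by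
  rw [← mul_div_assoc, le_div_iff₀ (by positivity)]
  calc t * (N * (N + M)) = t * N * M + t * N ^ 2 := by ring
    _ ≤ c * M + d * M := by gcongr
    _ = (c + d) * M := by ring

variable {N r p M : ℝ}

lemma abs_inv_sub_inv_le (hN : 0 < N) (hr : N / 2 ≤ r) (hrN : |r - N| ≤ M) :
    |r⁻¹ - N⁻¹| ≤ 3 * (M / (N * (N + M))) := by
  have hr0 : 0 < r := by linarith
  have hdiff : |r⁻¹ - N⁻¹| = |r - N| / (r * N) := by
    rw [inv_sub_inv hr0.ne' hN.ne', abs_div, abs_sub_comm, abs_of_pos (mul_pos hr0 hN)]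
  have hM : 0 ≤ M := (abs_nonneg _).trans hrN
  have hNr : N / r ≤ 2 := by rw [div_le_iff₀ hr0]; linarith
  have hdist : |r - N| ≤ r := abs_le.2 ⟨by linarith, by linarith⟩
  have hc : |r⁻¹ - N⁻¹| * N ≤ 1 := by
    calc |r⁻¹ - N⁻¹| * N = |r - N| / r := by rw [hdiff]; field_simp
      _ ≤ 1 := div_le_one_of_le₀ hdist hr0.le
  have hd : |r⁻¹ - N⁻¹| * N ^ 2 ≤ 2 * M := by
    calc |r⁻¹ - N⁻¹| * N ^ 2 = |r - N| * (N / r) := by rw [hdiff]; field_simp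
      _ ≤ M * 2 := by gcongr
      _ = 2 * M := mul_comm _ _
  refine (le_mul_div_mul_add_of_mul_le hN hM hc hd).trans_eq ?_
  norm_num

lemma abs_arctan_div_div_le (hN : 0 < N) (hr : N / 2 ≤ r) (hp : |p| ≤ M) :
    |Real.arctan (p / r)| / r ≤ (Real.pi + 4) * (M / (N * (N + M))) := by
  have hr0 : 0 < r := by linarith
  have hNr : N / r ≤ 2 := by rw [div_le_iff₀ hr0]; linarith
  have hM : 0 ≤ M := (abs_nonneg p).trans hp
  have hsmall : |Real.arctan (p / r)| ≤ M / r := by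
    calc |Real.arctan (p / r)| ≤ |p / r| := abs_arctan_le_abs _
      _ = |p| / r := by rw [abs_div, abs_of_pos hr0]
      _ ≤ M / r := by gcongr
  refine le_mul_div_mul_add_of_mul_le hN hM ?_ ?_
  · calc |Real.arctan (p / r)| / r * N = |Real.arctan (p / r)| * (N / r) := by ring
      _ ≤ Real.pi / 2 * 2 := by gcongr; exact abs_arctan_le_pi_div_two _
      _ = Real.pi := by ring
  · calc |Real.arctan (p / r)| / r * N ^ 2 ≤ M / r / r * N ^ 2 := by gcongr
      _ = (N / r) ^ 2 * M := by ring
      _ ≤ 2 ^ 2 * M := by gcongr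
      _ = 4 * M := by norm_num

lemma abs_arctan_kernel_sub_le (hN : 0 < N) (hr : N / 2 ≤ r) (hrN : |r - N| ≤ M) (hp : |p| ≤ M) :
    |1 / (2 * r) * (1 / 2 + 1 / Real.pi * Real.arctan (p / r)) - 1 / (4 * N)| ≤
      2 * (M / (N * (N + M))) := by
  have hr0 : 0 < r := by linarith
  have hM : 0 ≤ M := (abs_nonneg p).trans hp
  have hpi : (Real.pi + 4) / (2 * Real.pi) ≤ 5 / 4 := by
    rw [div_le_div_iff₀ (by positivity) (by norm_num)]
    linarith [Real.pi_gt_three]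
  have hsplit : 1 / (2 * r) * (1 / 2 + 1 / Real.pi * Real.arctan (p / r)) - 1 / (4 * N) =
      (r⁻¹ - N⁻¹) / 4 + Real.arctan (p / r) / r / (2 * Real.pi) := by
    field_simp
    ring
  calc _ ≤ |r⁻¹ - N⁻¹| / 4 + |Real.arctan (p / r)| / r / (2 * Real.pi) := by
        rw [hsplit]
        refine (abs_add_le _ _).trans_eq ?_
        simp only [abs_div, abs_of_pos hr0, abs_of_pos Real.two_pi_pos, Nat.abs_ofNat]
    _ ≤ 3 * (M / (N * (N + M))) / 4 +
        (Real.pi + 4) * (M / (N * (N + M))) / (2 * Real.pi) := by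
        gcongr
        · exact abs_inv_sub_inv_le hN hr hrN
        · exact abs_arctan_div_div_le hN hr hp
    _ = (3 / 4 + (Real.pi + 4) / (2 * Real.pi)) * (M / (N * (N + M))) := by ring
    _ ≤ (3 / 4 + 5 / 4) * (M / (N * (N + M))) := by gcongr
    _ = 2 * (M / (N * (N + M))) := by norm_num

end ScalarEstimates

section LogarithmicSeries

variable {M : ℝ}

lemma div_mul_add_le_two_mul_log_sub_log {t : ℝ} (hM : 0 ≤ M) (ht : 1 ≤ t) :
    M / (t * (t + M)) ≤ 2 * (Real.log (1 + M / t) - Real.log (1 + M / (t + 1))) := by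
  have hratio : 1 - ((1 + M / t) / (1 + M / (t + 1)))⁻¹ = M / ((t + 1) * (t + M)) := by
    field_simp
    ring
  calc M / (t * (t + M)) = (1 + t) / t * (M / ((t + 1) * (t + M))) := by field_simp; ring
    _ ≤ 2 * (M / ((t + 1) * (t + M))) := by
        gcongr
        rw [div_le_iff₀ (by positivity)]
        linarith
    _ = 2 * (1 - ((1 + M / t) / (1 + M / (t + 1)))⁻¹) := by rw [hratio]
    _ ≤ 2 * Real.log ((1 + M / t) / (1 + M / (t + 1))) := by
        gcongr
        exact Real.one_sub_inv_le_log_of_pos (by positivity)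
    _ = _ := by rw [Real.log_div (by positivity) (by positivity)]

lemma sum_range_div_mul_add_le (hM : 0 ≤ M) (K : ℕ) :
    ∑ k ∈ Finset.range K, M / (((k : ℝ) + 1) * (k + 1 + M)) ≤ 2 * Real.log (1 + M) := by
  have hlog : 0 ≤ Real.log (1 + M / (K + 1)) :=
    Real.log_nonneg (le_add_of_nonneg_right (by positivity))
  calc ∑ k ∈ Finset.range K, M / (((k : ℝ) + 1) * (k + 1 + M))
      ≤ ∑ k ∈ Finset.range K,
          2 * (Real.log (1 + M / (k + 1)) - Real.log (1 + M / (k + 1 + 1))) :=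
        Finset.sum_le_sum fun k _ => div_mul_add_le_two_mul_log_sub_log hM (by simp)
    _ = 2 * (Real.log (1 + M) - Real.log (1 + M / (K + 1))) := by
        rw [← Finset.mul_sum]
        simpa using Finset.sum_range_sub' (fun k : ℕ => Real.log (1 + M / (k + 1))) K
    _ ≤ 2 * Real.log (1 + M) := by linarith

lemma summable_div_mul_add (hM : 0 ≤ M) :
    Summable fun k : ℕ => M / (((k : ℝ) + 1) * (k + 1 + M)) :=
  summable_of_sum_range_le (fun _ => by positivity) (sum_range_div_mul_add_le hM)

lemma tsum_div_mul_add_le (hM : 0 ≤ M) :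
    ∑' k : ℕ, M / (((k : ℝ) + 1) * (k + 1 + M)) ≤ 2 * Real.log (1 + M) :=
  Real.tsum_le_of_sum_range_le (fun _ => by positivity) (sum_range_div_mul_add_le hM)

-- The summand at `n = 0` is `M / 0 = 0`.
lemma hasSum_int_div_abs_mul_abs_add (hM : 0 ≤ M) :
    HasSum (fun n : ℤ => M / (|(n : ℝ)| * (|(n : ℝ)| + M)))
      (2 * ∑' k : ℕ, M / (((k : ℝ) + 1) * (k + 1 + M))) := by
  have habs (k : ℕ) : |(k : ℝ) + 1| = k + 1 := abs_of_nonneg (by positivity)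
  convert HasSum.of_add_one_of_neg_add_one (f := fun n : ℤ => M / (|(n : ℝ)| * (|(n : ℝ)| + M)))
    (by simpa [habs] using (summable_div_mul_add hM).hasSum)
    (by simpa only [Int.cast_neg, Int.cast_add, Int.cast_natCast, Int.cast_one, abs_neg, habs]
      using (summable_div_mul_add hM).hasSum) using 1
  simp [two_mul]

end LogarithmicSeries

section AnisotropicNorm

/-- The norm `|μ⃗|_a` of `(μ₁, μ₂, η)` attached to the matrix `a`, in which `|η|²` is weighted by
the determinant of `a`. -/
noncomputable def anisotropicNorm (a11 a12 a22 μ1 μ2 : ℝ) (η : ℂ) : ℝ :=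
  √(a11 * μ1 ^ 2 + 2 * a12 * μ1 * μ2 + a22 * μ2 ^ 2 + (a11 * a22 - a12 ^ 2) * Complex.normSq η)

lemma anisotropicNorm_one_zero_one (μ1 μ2 : ℝ) (η : ℂ) :
    anisotropicNorm 1 0 1 μ1 μ2 η = √(μ1 ^ 2 + μ2 ^ 2 + Complex.normSq η) := by
  simp [anisotropicNorm]

lemma abs_sqrt_sq_add_normSq_add_sub_norm_le (μ : ℝ) (η z : ℂ) :
    |√(μ ^ 2 + Complex.normSq (η + z)) - ‖z‖| ≤ √(μ ^ 2 + Complex.normSq η) := by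
  simpa [WithLp.prod_norm_eq_of_L2, Complex.normSq_eq_norm_sq] using
    abs_norm_sub_norm_le (WithLp.toLp 2 (μ, η + z)) (WithLp.toLp 2 ((0 : ℝ), z))

lemma abs_div_two_le_sqrt_sq_add_normSq_add (μ : ℝ) {η : ℂ} (hη : |η.re| ≤ 1 / 2) {n : ℤ}
    (hn : n ≠ 0) : |(n : ℝ)| / 2 ≤ √(μ ^ 2 + Complex.normSq (η + n)) := by
  have hn1 : 1 ≤ |(n : ℝ)| := mod_cast Int.one_le_abs hn
  calc |(n : ℝ)| / 2 ≤ |(n : ℝ)| - |η.re| := by linarith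
    _ ≤ |(η + n).re| := by simpa [add_comm] using abs_sub_abs_le_abs_sub (n : ℝ) (-η.re)
    _ ≤ ‖η + n‖ := Complex.abs_re_le_norm _
    _ ≤ √(μ ^ 2 + Complex.normSq (η + n)) :=
        Real.sqrt_le_sqrt (le_add_of_nonneg_left (sq_nonneg μ))

end AnisotropicNorm

section IdentityMatrix

variable (μ1 μ2 : ℝ) {η : ℂ}

lemma abs_alpha1Term_one_zero_one_le (hη : |η.re| ≤ 1 / 2) (n : ℤ) :
    |alpha1Term 1 0 1 μ1 μ2 η n| ≤
      2 * (anisotropicNorm 1 0 1 μ1 μ2 η /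
        (|(n : ℝ)| * (|(n : ℝ)| + anisotropicNorm 1 0 1 μ1 μ2 η))) := by
  rcases eq_or_ne n 0 with rfl | hn
  · simp [alpha1Term]
  rw [anisotropicNorm_one_zero_one]
  have hη0 := Complex.normSq_nonneg η
  have hp : |μ2| ≤ √(μ1 ^ 2 + μ2 ^ 2 + Complex.normSq η) :=
    Real.abs_le_sqrt (by linarith [sq_nonneg μ1])
  have hrN : |(√(μ1 ^ 2 + Complex.normSq (η + n)) - |(n : ℝ)|)| ≤
      √(μ1 ^ 2 + μ2 ^ 2 + Complex.normSq η) := by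
    calc _ ≤ √(μ1 ^ 2 + Complex.normSq η) := by
          simpa only [Complex.norm_intCast] using abs_sqrt_sq_add_normSq_add_sub_norm_le μ1 η n
      _ ≤ _ := Real.sqrt_le_sqrt (by linarith [sq_nonneg μ2])
  simpa [alpha1Term, hn, alpha1] using abs_arctan_kernel_sub_le (abs_pos.2 (Int.cast_ne_zero.2 hn))
    (abs_div_two_le_sqrt_sq_add_normSq_add μ1 hη hn) hrN hp

lemma summable_abs_alpha1Term_one_zero_one (hη : |η.re| ≤ 1 / 2) :
    Summable fun n : ℤ => |alpha1Term 1 0 1 μ1 μ2 η n| :=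
  ((hasSum_int_div_abs_mul_abs_add (Real.sqrt_nonneg _)).mul_left 2).summable.of_nonneg_of_le
    (fun _ => abs_nonneg _) (abs_alpha1Term_one_zero_one_le μ1 μ2 hη)

lemma abs_tsum_alpha1Term_one_zero_one_le (hη : |η.re| ≤ 1 / 2) :
    |∑' n : ℤ, alpha1Term 1 0 1 μ1 μ2 η n| ≤
      8 * Real.log (1 + anisotropicNorm 1 0 1 μ1 μ2 η) := by
  have hM : 0 ≤ anisotropicNorm 1 0 1 μ1 μ2 η := Real.sqrt_nonneg _
  have hbound := tsum_of_norm_bounded (f := alpha1Term 1 0 1 μ1 μ2 η)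
    ((hasSum_int_div_abs_mul_abs_add hM).mul_left 2) (abs_alpha1Term_one_zero_one_le μ1 μ2 hη)
  rw [Real.norm_eq_abs] at hbound
  linarith [tsum_div_mul_add_le hM]

end IdentityMatrix

section Reduction

variable {a11 a12 a22 : ℝ} (μ1 μ2 : ℝ) (η : ℂ)

lemma alpha1_eq_inv_sqrt_mul_alpha1_one_zero_one (ha22 : 0 < a22) :
    alpha1 a11 a12 a22 μ1 μ2 η = (√a22)⁻¹ * alpha1 1 0 1 (μ1 / √a22)
      ((a22 * μ2 + a12 * μ1) / (√(a11 * a22 - a12 ^ 2) * √a22)) η := by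
  have hradius : √(μ1 ^ 2 + a22 * Complex.normSq η) =
      √a22 * √((μ1 / √a22) ^ 2 + Complex.normSq η) := by
    rw [← Real.sqrt_mul ha22.le, div_pow, Real.sq_sqrt ha22.le, mul_add,
      mul_div_cancel₀ _ ha22.ne']
  simp only [alpha1, hradius, div_div, one_mul, zero_mul, add_zero, mul_one, zero_pow two_ne_zero,
    sub_zero, Real.sqrt_one, mul_assoc]
  ring

lemma alpha1Term_eq_inv_sqrt_mul_alpha1Term_one_zero_one (ha22 : 0 < a22) (n : ℤ) :
    alpha1Term a11 a12 a22 μ1 μ2 η n = (√a22)⁻¹ * alpha1Term 1 0 1 (μ1 / √a22)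
      ((a22 * μ2 + a12 * μ1) / (√(a11 * a22 - a12 ^ 2) * √a22)) η n := by
  unfold alpha1Term
  split_ifs
  · rw [mul_zero]
  · rw [alpha1_eq_inv_sqrt_mul_alpha1_one_zero_one μ1 μ2 _ ha22, Real.sqrt_one]
    ring

lemma rpow_neg_half_mul_anisotropicNorm (ha22 : 0 < a22) (hA : 0 < a11 * a22 - a12 ^ 2) :
    (a11 * a22 - a12 ^ 2) ^ (-(1 : ℝ) / 2) * anisotropicNorm a11 a12 a22 μ1 μ2 η =
      anisotropicNorm 1 0 1 (μ1 / √a22)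
        ((a22 * μ2 + a12 * μ1) / (√(a11 * a22 - a12 ^ 2) * √a22)) η := by
  rw [anisotropicNorm_one_zero_one, anisotropicNorm, neg_div, Real.rpow_neg hA.le,
    ← Real.sqrt_eq_rpow, ← Real.sqrt_inv, ← Real.sqrt_mul (by positivity)]
  congr 1
  rw [div_pow, div_pow, mul_pow, Real.sq_sqrt ha22.le, Real.sq_sqrt hA.le]
  field_simp
  ring

end Reduction

section EllipticBound

variable {a11 a12 a22 : ℝ} (μ1 μ2 : ℝ) {η : ℂ}

lemma summable_abs_alpha1Term (ha22 : 0 < a22) (hη : |η.re| ≤ 1 / 2) :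
    Summable fun n : ℤ => |alpha1Term a11 a12 a22 μ1 μ2 η n| := by
  simp only [alpha1Term_eq_inv_sqrt_mul_alpha1Term_one_zero_one μ1 μ2 η ha22, abs_mul]
  exact (summable_abs_alpha1Term_one_zero_one _ _ hη).mul_left _

lemma abs_tsum_alpha1Term_le (ha22 : 0 < a22) (hA : 0 < a11 * a22 - a12 ^ 2)
    (hη : |η.re| ≤ 1 / 2) :
    |∑' n : ℤ, alpha1Term a11 a12 a22 μ1 μ2 η n| ≤ 8 * (√a22)⁻¹ *
      Real.log (1 + (a11 * a22 - a12 ^ 2) ^ (-(1 : ℝ) / 2) *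
        anisotropicNorm a11 a12 a22 μ1 μ2 η) := by
  simp only [alpha1Term_eq_inv_sqrt_mul_alpha1Term_one_zero_one μ1 μ2 η ha22,
    rpow_neg_half_mul_anisotropicNorm μ1 μ2 η ha22 hA, tsum_mul_left, abs_mul]
  rw [abs_of_nonneg (by positivity), mul_comm 8, mul_assoc]
  gcongr
  exact abs_tsum_alpha1Term_one_zero_one_le _ _ hη

lemma IsElliptic.inv_mul_sqrt_det_le {C₀ : ℝ} (hell : IsElliptic C₀ a11 a12 a22) :
    C₀⁻¹ * √(a11 * a22 - a12 ^ 2) ≤ a22 := by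
  simpa using (hell 0 1).1

lemma inv_sqrt_le_sqrt_mul_rpow_neg_quarter {c A b : ℝ} (hc : 0 < c) (hA : 0 < A)
    (hb : c⁻¹ * √A ≤ b) : (√b)⁻¹ ≤ √c * A ^ (-(1 : ℝ) / 4) := by
  have hroot : A ^ (-(1 : ℝ) / 4) = (√(√A))⁻¹ := by
    rw [Real.sqrt_eq_rpow, Real.sqrt_eq_rpow, ← Real.rpow_mul hA.le, ← Real.rpow_neg hA.le]
    norm_num
  calc (√b)⁻¹ ≤ (√(c⁻¹ * √A))⁻¹ := by gcongr
    _ = √c * A ^ (-(1 : ℝ) / 4) := by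
        rw [hroot, Real.sqrt_mul (by positivity), Real.sqrt_inv, mul_inv, inv_inv]

theorem statement4_general {C₀ : ℝ} (hC₀ : 0 < C₀) (hA : 0 < a11 * a22 - a12 ^ 2)
    (ha22 : C₀⁻¹ * √(a11 * a22 - a12 ^ 2) ≤ a22) (hη : |η.re| ≤ 1 / 2) :
    Summable (fun n : ℤ => |alpha1Term a11 a12 a22 μ1 μ2 η n|) ∧
      |∑' n : ℤ, alpha1Term a11 a12 a22 μ1 μ2 η n| ≤
        8 * √C₀ * (a11 * a22 - a12 ^ 2) ^ (-(1 : ℝ) / 4) *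
          Real.log (1 + (a11 * a22 - a12 ^ 2) ^ (-(1 : ℝ) / 2) *
            anisotropicNorm a11 a12 a22 μ1 μ2 η) := by
  have ha22_pos : 0 < a22 := lt_of_lt_of_le (by positivity) ha22
  have hnorm : 0 ≤ anisotropicNorm a11 a12 a22 μ1 μ2 η := Real.sqrt_nonneg _
  refine ⟨summable_abs_alpha1Term μ1 μ2 ha22_pos hη,
    (abs_tsum_alpha1Term_le μ1 μ2 ha22_pos hA hη).trans ?_⟩
  rw [mul_assoc 8 √C₀]
  gcongr
  · exact Real.log_nonneg (le_add_of_nonneg_right (by positivity))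
  · exact inv_sqrt_le_sqrt_mul_rpow_neg_quarter hC₀ hA ha22

end EllipticBound

/-- the series defining `α̃₁` converges absolutely and
`|α̃₁ − α₁| ≤ C·A^{−1/4}·log(1 + A^{−1/2}|μ⃗|_a)` for `|Re η| ≤ 1/2`, uniformly over
`C₀`-elliptic matrices with `A ≥ 1`. -/
theorem statement4 : ∀ C₀ : ℝ, 1 ≤ C₀ → ∃ C : ℝ, 0 < C ∧
    ∀ a11 a12 a22 : ℝ, 0 < a11 → 1 ≤ a11 * a22 - a12 ^ 2 → IsElliptic C₀ a11 a12 a22 →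
    ∀ μ1 μ2 x y : ℝ, 0 < μ1 ^ 2 + x ^ 2 + y ^ 2 → |x| ≤ 1 / 2 →
      Summable (fun n : ℤ =>
        |alpha1Term a11 a12 a22 μ1 μ2 ((x : ℂ) + (y : ℂ) * Complex.I) n|) ∧
      |∑' n : ℤ, alpha1Term a11 a12 a22 μ1 μ2 ((x : ℂ) + (y : ℂ) * Complex.I) n|
        ≤ C * (a11 * a22 - a12 ^ 2) ^ (-(1 : ℝ) / 4) *
          Real.log (1 + (a11 * a22 - a12 ^ 2) ^ (-(1 : ℝ) / 2) *
            Real.sqrt (a11 * μ1 ^ 2 + 2 * a12 * μ1 * μ2 + a22 * μ2 ^ 2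
              + (a11 * a22 - a12 ^ 2) * (x ^ 2 + y ^ 2))) := by
  refine fun C₀ hC₀ => ⟨8 * √C₀, by positivity, fun a11 a12 a22 _ hA hell μ1 μ2 x y _ hx => ?_⟩
  simpa only [anisotropicNorm, Complex.normSq_add_mul_I] using statement4_general μ1 μ2
    (zero_lt_one.trans_le hC₀) (zero_lt_one.trans_le hA) hell.inv_mul_sqrt_det_le
    (η := x + y * Complex.I) (by simpa using hx)
end

section
/- Let A > 0 and define the Ooguri–Vafa potential for (μ, x, y) ∈ ℝ³ with (μ, x+n, y) ≠ (0,0,0) for every n ∈ ℤ by V(μ, x, y) = A + 1/(2√(μ² + x² + y²)) + Σ_{n∈ℤ, n≠0} ( 1/(2√(μ² + (x+n)² + y²)) − 1/(2|n|) ). Then: (i) the series converges absolutely; (ii) V is 1-periodic in x; and (iii) there is an absolute constant C (independent of A) such that whenever μ² + y² ≥ 1, | V(μ, x, y) − A + γ_E − log 2 + (1/2)·log(μ² + y²) | ≤ C·exp(−2π·√(μ² + y²)), where γ_E is the Euler–Mascheroni constant. -/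
/-- The `n`-th term (`n ≠ 0`) of the series defining the Ooguri–Vafa potential. -/
noncomputable def OVterm (μ x y : ℝ) (n : ℤ) : ℝ :=
  if n = 0 then 0
  else 1 / (2 * Real.sqrt (μ ^ 2 + (x + n) ^ 2 + y ^ 2)) - 1 / (2 * |(n : ℝ)|)

/-- The Ooguri–Vafa potential
`V(μ,x,y) = A + 1/(2√(μ²+x²+y²)) + Σ_{n≠0}(1/(2√(μ²+(x+n)²+y²)) − 1/(2|n|))`. -/
noncomputable def OVpot (A μ x y : ℝ) : ℝ :=
  A + 1 / (2 * Real.sqrt (μ ^ 2 + x ^ 2 + y ^ 2)) + ∑' n : ℤ, OVterm μ x y n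

/-!
`V - A` is a function of `x` and `ρ = √(μ ^ 2 + y ^ 2)` only, and it is `1`-periodic in `x`. Each
term integrates over a period to a difference of values of `arsinh`, so the mean over a period
telescopes against the harmonic numbers to `log 2 - log ρ - γ`.

The `x`-derivative is the lattice sum of `-t / (2 * (ρ ^ 2 + t ^ 2) ^ (3 / 2))`, which decays fast
enough for Poisson summation. This function is odd, hence has no zero mode, and it is holomorphic in
the strip `|im z| < ρ`. Moving the contour to `|im z| = ρ - δ` with `δ` fixed bounds the mode `k` by
a multiple of `exp (-2 * π * |k| * (ρ - δ))`, so the derivative is `O(exp (-2 * π * ρ))`, and `V`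
differs from its mean by no more than that.
-/

namespace OoguriVafa

open Filter Topology MeasureTheory intervalIntegral Real FourierTransform

lemma tsum_add_one_sub_eq_zero_of_even {G : Type*} [AddCommGroup G] [IsAddTorsionFree G]
    [TopologicalSpace G] [IsTopologicalAddGroup G] [T2Space G] {g : ℤ → G} (hg : Function.Even g) :
    ∑' n : ℤ, (g (n + 1) - g n) = 0 := by
  -- The reflection `n ↦ -1 - n` negates the differences of an even function.
  have hreflect : ∑' n : ℤ, (g (n + 1) - g n) = ∑' n : ℤ, -(g (n + 1) - g n) := by
    rw [← (Equiv.subLeft (-1 : ℤ)).tsum_eq]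
    refine tsum_congr fun n => ?_
    rw [Equiv.subLeft_apply, show -1 - n + 1 = -n by ring, show -1 - n = -(n + 1) by ring,
      hg, hg, neg_sub]
  rw [tsum_neg] at hreflect
  exact self_eq_neg.mp hreflect

section General

variable {E : Type*} [NormedAddCommGroup E]

lemma abs_inv_norm_add_sub_inv_norm_le {v w : E} (hv : 0 < ‖v‖) (hw : 2 * ‖w‖ ≤ ‖v‖) :
    |‖w + v‖⁻¹ - ‖v‖⁻¹| ≤ 2 * ‖w‖ / ‖v‖ ^ 2 := by
  have hdiff : |‖v‖ - ‖w + v‖| ≤ ‖w‖ := by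
    simpa [norm_sub_rev] using abs_norm_sub_norm_le v (w + v)
  have hlower : ‖v‖ / 2 ≤ ‖w + v‖ := by linarith [le_abs_self (‖v‖ - ‖w + v‖)]
  have hpos : 0 < ‖w + v‖ := by linarith
  calc |‖w + v‖⁻¹ - ‖v‖⁻¹| = |‖v‖ - ‖w + v‖| / (‖w + v‖ * ‖v‖) := by
        rw [inv_sub_inv hpos.ne' hv.ne', abs_div, abs_of_pos (mul_pos hpos hv)]
    _ ≤ ‖w‖ / (‖v‖ / 2 * ‖v‖) := by gcongr
    _ = 2 * ‖w‖ / ‖v‖ ^ 2 := by field_simp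

lemma summable_inv_add_int_sq {a : ℝ} (ha : 0 ≤ a) :
    Summable fun n : ℤ => (a + (n : ℝ) ^ 2)⁻¹ := by
  refine (Real.summable_one_div_int_pow.mpr one_lt_two).of_norm_bounded_eventually ?_
  filter_upwards [eventually_cofinite_ne 0] with n hn
  have : 0 < (n : ℝ) ^ 2 := by positivity
  rw [Real.norm_of_nonneg (by positivity), one_div]
  gcongr
  linarith

lemma integrable_inv_add_sq {a : ℝ} (ha : 0 < a) : Integrable fun t : ℝ => (a + t ^ 2)⁻¹ := by
  have := (integrable_inv_one_add_sq.comp_div (sqrt_pos.mpr ha).ne').const_mul a⁻¹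
  refine this.congr (ae_of_all _ fun t => ?_)
  simp only [div_pow, sq_sqrt ha.le]
  field_simp

lemma tendsto_inv_add_sq_cocompact (a : ℝ) :
    Tendsto (fun t : ℝ => (a + t ^ 2)⁻¹) (cocompact ℝ) (𝓝 0) := by
  refine tendsto_inv_atTop_zero.comp (tendsto_atTop_add_const_left _ _ ?_)
  exact ((tendsto_pow_atTop two_ne_zero).comp tendsto_norm_cocompact_atTop).congr fun t => sq_abs t

lemma tendsto_arsinh_sub_log_atTop :
    Tendsto (fun x => arsinh x - log x) atTop (𝓝 (log 2)) := by
  have hlim : Tendsto (fun x : ℝ => 1 + √((x⁻¹) ^ 2 + 1)) atTop (𝓝 2) := by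
    have hcont : Continuous fun u : ℝ => 1 + √(u ^ 2 + 1) := by fun_prop
    have htwo : (1 : ℝ) + √(0 ^ 2 + 1) = 2 := by norm_num
    exact htwo ▸ (hcont.tendsto 0).comp tendsto_inv_atTop_zero
  refine (hlim.log two_ne_zero).congr' ?_
  filter_upwards [eventually_gt_atTop 0] with x hx
  have hfactor : x + √(1 + x ^ 2) = x * (1 + √((x⁻¹) ^ 2 + 1)) := by
    rw [show 1 + x ^ 2 = x ^ 2 * ((x⁻¹) ^ 2 + 1) by field_simp,
      sqrt_mul (sq_nonneg x), sqrt_sq hx.le]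
    ring
  rw [arsinh, hfactor, log_mul hx.ne' (by positivity), add_sub_cancel_left]

variable [NormedSpace ℝ E]

lemma norm_smul_sub_integral_le_of_periodic [CompleteSpace E] {f f' : ℝ → E} {T C : ℝ} (hT : 0 ≤ T)
    (hper : Function.Periodic f T) (hf : ∀ x, HasDerivAt f (f' x) x) (hC : ∀ x, ‖f' x‖ ≤ C)
    (x : ℝ) : ‖T • f x - ∫ y in 0..T, f y‖ ≤ C * T ^ 2 := by
  have hcont : Continuous f := continuous_iff_continuousAt.mpr fun y => (hf y).continuousAt
  have hC0 : 0 ≤ C := (norm_nonneg _).trans (hC x)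
  have hmean : T • f x - ∫ y in 0..T, f y = ∫ y in x..x + T, (f x - f y) := by
    rw [integral_sub intervalIntegrable_const (hcont.intervalIntegrable _ _),
      intervalIntegral.integral_const, hper.intervalIntegral_add_eq x 0, add_sub_cancel_left,
      zero_add]
  have hosc : ∀ y ∈ Set.uIoc x (x + T), ‖f x - f y‖ ≤ C * T := by
    intro y hy
    rw [Set.uIoc_of_le (by linarith)] at hy
    have hlip := convex_univ.norm_image_sub_le_of_norm_hasDerivWithin_le
      (fun z _ => (hf z).hasDerivWithinAt) (fun z _ => hC z) (Set.mem_univ y) (Set.mem_univ x)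
    refine hlip.trans ?_
    gcongr
    rw [norm_eq_abs, abs_le]
    constructor <;> linarith [hy.1, hy.2]
  calc ‖T • f x - ∫ y in 0..T, f y‖ ≤ C * T * |x + T - x| := by
        rw [hmean]; exact norm_integral_le_of_norm_le_const hosc
    _ = C * T ^ 2 := by rw [add_sub_cancel_left, abs_of_nonneg hT]; ring

end General

section Strip

variable {E : Type*} [NormedAddCommGroup E] [NormedSpace ℂ E]
  {f : ℂ → E} {B : ℝ → ℝ} {a b : ℝ}

lemma integrable_horizontal_of_strip
    (hf : DifferentiableOn ℂ f (Complex.im ⁻¹' Set.uIcc a b)) (hB : Integrable B)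
    (hfB : ∀ z : ℂ, z.im ∈ Set.uIcc a b → ‖f z‖ ≤ B z.re) {s : ℝ} (hs : s ∈ Set.uIcc a b) :
    Integrable fun t : ℝ => f (t + s * Complex.I) := by
  have hcont : Continuous fun t : ℝ => f (t + s * Complex.I) :=
    hf.continuousOn.comp_continuous (by fun_prop) fun t => by simpa using hs
  refine hB.mono' hcont.aestronglyMeasurable (ae_of_all _ fun t => ?_)
  simpa using hfB (t + s * Complex.I) (by simpa using hs)

lemma tendsto_integral_vertical_of_strip (hB0 : Tendsto B (cocompact ℝ) (𝓝 0))
    (hfB : ∀ z : ℂ, z.im ∈ Set.uIcc a b → ‖f z‖ ≤ B z.re) :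
    Tendsto (fun R : ℝ => ∫ s in a..b, f (R + s * Complex.I)) (cocompact ℝ) (𝓝 0) := by
  refine squeeze_zero_norm (fun R => ?_) (by simpa using hB0.mul_const |b - a|)
  refine norm_integral_le_of_norm_le_const fun s hs => ?_
  simpa using hfB (R + s * Complex.I) (by simpa using Set.uIoc_subset_uIcc hs)

theorem integral_horizontal_eq_of_strip [CompleteSpace E]
    (hf : DifferentiableOn ℂ f (Complex.im ⁻¹' Set.uIcc a b))
    (hB : Integrable B) (hB0 : Tendsto B (cocompact ℝ) (𝓝 0))
    (hfB : ∀ z : ℂ, z.im ∈ Set.uIcc a b → ‖f z‖ ≤ B z.re) :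
    ∫ t : ℝ, f (t + a * Complex.I) = ∫ t : ℝ, f (t + b * Complex.I) := by
  have hrect (R : ℝ) := Complex.integral_boundary_rect_eq_zero_of_differentiableOn f
    ⟨-R, a⟩ ⟨R, b⟩ (hf.mono fun z hz => hz.2)
  have hline {s : ℝ} (hs : s ∈ Set.uIcc a b) := intervalIntegral_tendsto_integral
    (integrable_horizontal_of_strip hf hB hfB hs) tendsto_neg_atTop_atBot tendsto_id
  have hside := tendsto_integral_vertical_of_strip hB0 hfB
  have hright := (hside.mono_left atTop_le_cocompact).const_smul Complex.I
  have hleft := ((hside.mono_left atBot_le_cocompact).comp tendsto_neg_atTop_atBot).const_smul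
    Complex.I
  have hlim := (((hline Set.left_mem_uIcc).sub (hline Set.right_mem_uIcc)).add hright).sub hleft
  simp only [smul_zero, add_zero, sub_zero] at hlim
  refine sub_eq_zero.mp (tendsto_nhds_unique hlim (tendsto_const_nhds.congr fun R => ?_))
  simpa using (hrect R).symm

theorem norm_fourier_le_of_strip [CompleteSpace E] {c : ℝ}
    (hf : DifferentiableOn ℂ f {z | |z.im| ≤ c})
    (hB : Integrable B) (hB0 : Tendsto B (cocompact ℝ) (𝓝 0))
    (hfB : ∀ z : ℂ, |z.im| ≤ c → ‖f z‖ ≤ B z.re) (hc : 0 ≤ c) (k : ℝ) :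
    ‖𝓕 (fun t : ℝ => f t) k‖ ≤ exp (-(2 * π * |k| * c)) * ∫ t, B t := by
  -- Moving the contour against the sign of `k` makes the exponential small.
  obtain ⟨b, hbc, hkb⟩ : ∃ b, |b| = c ∧ k * b = -(|k| * c) := by
    rcases le_total 0 k with hk | hk
    · exact ⟨-c, by simp [abs_of_nonneg, hc], by simp [abs_of_nonneg hk]⟩
    · exact ⟨c, abs_of_nonneg hc, by simp [abs_of_nonpos hk]⟩
  set g : ℂ → E := fun z => Complex.exp (-2 * π * k * z * Complex.I) • f z with hg
  have hgnorm (z : ℂ) : ‖g z‖ = exp (2 * π * (k * z.im)) * ‖f z‖ := by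
    simp [hg, norm_smul, Complex.norm_exp, mul_assoc]
  have hstrip {z : ℂ} (hz : z.im ∈ Set.uIcc 0 b) : |z.im| ≤ c := by
    simpa [hbc] using Set.abs_sub_left_of_mem_uIcc hz
  have hgdiff : DifferentiableOn ℂ g (Complex.im ⁻¹' Set.uIcc 0 b) :=
    DifferentiableOn.smul (by fun_prop) (hf.mono fun z => hstrip)
  have hgB (z : ℂ) (hz : z.im ∈ Set.uIcc 0 b) : ‖g z‖ ≤ exp (2 * π * (|k| * c)) * B z.re := by
    rw [hgnorm]
    have hkz : k * z.im ≤ |k| * c :=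
      (le_abs_self _).trans (by rw [abs_mul]; gcongr; exact hstrip hz)
    gcongr
    exact hfB z (hstrip hz)
  have hshift := integral_horizontal_eq_of_strip hgdiff (hB.const_mul _)
    (by simpa using hB0.const_mul (exp (2 * π * (|k| * c)))) hgB
  have hfourier : 𝓕 (fun t : ℝ => f t) k = ∫ t : ℝ, g (t + b * Complex.I) := by
    rw [← hshift, Real.fourier_real_eq_integral_exp_smul]
    refine integral_congr_ae (ae_of_all _ fun t => ?_)
    simp [hg, mul_right_comm _ (t : ℂ) k]
  rw [hfourier, ← MeasureTheory.integral_const_mul]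
  refine norm_integral_le_of_norm_le (hB.const_mul _) (ae_of_all _ fun t => ?_)
  have him : (t + b * Complex.I).im = b := by simp
  have hre : (t + b * Complex.I).re = t := by simp
  have hbound := hfB (t + b * Complex.I) (by rw [him, hbc])
  rw [hgnorm, him, hkb, show 2 * π * -(|k| * c) = -(2 * π * |k| * c) by ring]
  rw [hre] at hbound
  gcongr

end Strip

lemma norm_tsum_int_add_le_of_norm_fourier_le {f : ℝ → ℂ} (hf : Continuous f) {p : ℝ} (hp : 1 < p)
    (hdecay : f =O[cocompact ℝ] fun t => |t| ^ (-p)) {u : ℤ → ℝ} (hu : Summable u)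
    (hfu : ∀ n : ℤ, ‖𝓕 f n‖ ≤ u n) (x : ℝ) :
    ‖∑' n : ℤ, f (x + n)‖ ≤ ∑' n, u n := by
  rw [Real.tsum_eq_tsum_fourier_of_rpow_decay_of_summable hf hp hdecay (hu.of_norm_bounded hfu) x]
  refine tsum_of_norm_bounded hu.hasSum fun n => ?_
  rw [norm_mul, fourier_apply, Circle.norm_coe, mul_one]
  exact hfu n

lemma summable_exp_neg_mul_abs_int {a : ℝ} (ha : 0 < a) :
    Summable fun n : ℤ => exp (-(a * |(n : ℝ)|)) := by
  have hnat : Summable fun n : ℕ => exp (-(a * n)) := by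
    simpa [mul_comm] using Real.summable_exp_nat_mul_iff.mpr (neg_lt_zero.mpr ha)
  exact .of_nat_of_neg (by simpa using hnat) (by simpa using hnat)

/-- The potential at height `t` along a line of a unit charge at distance `|ρ|` from the line, in
the normalisation of the Ooguri–Vafa potential. -/
noncomputable def coulomb (ρ t : ℝ) : ℝ := 1 / (2 * √(ρ ^ 2 + t ^ 2))

/-- The derivative of `coulomb ρ`. -/
noncomputable def coulombDeriv (ρ t : ℝ) : ℝ := -t / 2 * (ρ ^ 2 + t ^ 2) ^ (-(3 / 2) : ℝ)

/-- The holomorphic extension of `coulombDeriv ρ` to the strip `|im z| < ρ`. -/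
noncomputable def complexCoulombDeriv (ρ : ℝ) (z : ℂ) : ℂ :=
  -z / 2 * ((ρ : ℂ) ^ 2 + z ^ 2) ^ ((-(3 / 2) : ℝ) : ℂ)

lemma coulomb_eq_inv_norm (ρ t : ℝ) : coulomb ρ t = ‖(t + ρ * Complex.I : ℂ)‖⁻¹ / 2 := by
  rw [coulomb, Complex.norm_add_mul_I, add_comm (t ^ 2)]
  ring

lemma coulomb_eq_rpow (ρ t : ℝ) : coulomb ρ t = (ρ ^ 2 + t ^ 2) ^ (-(1 / 2) : ℝ) / 2 := by
  rw [coulomb, sqrt_eq_rpow, rpow_neg (by positivity)]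
  ring

lemma ofReal_coulombDeriv (ρ t : ℝ) : (coulombDeriv ρ t : ℂ) = complexCoulombDeriv ρ t := by
  rw [coulombDeriv, complexCoulombDeriv, Complex.ofReal_mul, Complex.ofReal_cpow (by positivity)]
  push_cast
  rfl

lemma coulombDeriv_neg (ρ t : ℝ) : coulombDeriv ρ (-t) = -coulombDeriv ρ t := by
  rw [coulombDeriv, coulombDeriv, neg_sq]
  ring

lemma mul_self_le_norm_and_mul_norm_le_norm {ρ δ : ℝ} {z : ℂ} (hδ : 0 < δ) (hz : |z.im| ≤ ρ - δ) :
    √(δ ^ 2 + z.re ^ 2) * √(δ ^ 2 + z.re ^ 2) ≤ ‖(ρ : ℂ) ^ 2 + z ^ 2‖ ∧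
      √(δ ^ 2 + z.re ^ 2) * ‖z‖ ≤ ‖(ρ : ℂ) ^ 2 + z ^ 2‖ := by
  obtain ⟨hlow, hupp⟩ := abs_le.mp hz
  have hnorm (σ : ℝ) : ‖z + σ * Complex.I‖ = √((z.im + σ) ^ 2 + z.re ^ 2) := by
    rw [Complex.norm_eq_sqrt_sq_add_sq, add_comm]
    simp
  have hnorm_zero : ‖z‖ = √(z.im ^ 2 + z.re ^ 2) := by simpa using hnorm 0
  have hfactor : ‖(ρ : ℂ) ^ 2 + z ^ 2‖ = ‖z + ρ * Complex.I‖ * ‖z + (-ρ : ℝ) * Complex.I‖ := by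
    rw [← norm_mul]
    congr 1
    push_cast
    linear_combination (ρ : ℂ) ^ 2 * Complex.I_sq
  have hupper : √(δ ^ 2 + z.re ^ 2) ≤ ‖z + ρ * Complex.I‖ := by
    rw [hnorm]
    gcongr
    linarith
  have hlower : √(δ ^ 2 + z.re ^ 2) ≤ ‖z + (-ρ : ℝ) * Complex.I‖ := by
    rw [hnorm, ← neg_sq (z.im + -ρ)]
    gcongr
    linarith
  rw [hfactor]
  refine ⟨by gcongr, ?_⟩
  -- The farther of the two zeros `±ρ * I` is at distance at least `‖z‖`.
  rcases le_total 0 z.im with him | him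
  · have hfar : ‖z‖ ≤ ‖z + ρ * Complex.I‖ := by
      rw [hnorm, hnorm_zero]
      gcongr
      linarith
    rw [mul_comm]
    gcongr
  · have hfar : ‖z‖ ≤ ‖z + (-ρ : ℝ) * Complex.I‖ := by
      rw [hnorm, hnorm_zero, ← neg_sq z.im, ← neg_sq (z.im + -ρ)]
      gcongr
      · linarith
      · linarith
    gcongr

lemma norm_complexCoulombDeriv_le {ρ δ : ℝ} {z : ℂ} (hδ : 0 < δ) (hz : |z.im| ≤ ρ - δ) :
    ‖complexCoulombDeriv ρ z‖ ≤ (δ ^ 2 + z.re ^ 2)⁻¹ / 2 := by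
  obtain ⟨hss, hsz⟩ := mul_self_le_norm_and_mul_norm_le_norm hδ hz
  have hs : 0 < √(δ ^ 2 + z.re ^ 2) := by positivity
  rw [← mul_self_sqrt (by positivity : 0 ≤ δ ^ 2 + z.re ^ 2), complexCoulombDeriv, norm_mul,
    norm_div, norm_neg, Complex.norm_ofNat, Complex.norm_cpow_real]
  set s := √(δ ^ 2 + z.re ^ 2)
  set W := ‖(ρ : ℂ) ^ 2 + z ^ 2‖
  have hW : 0 < W := (mul_pos hs hs).trans_le hss
  calc ‖z‖ / 2 * W ^ (-(3 / 2) : ℝ) = ‖z‖ / W / √W / 2 := by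
        rw [show (-(3 / 2) : ℝ) = -1 - 1 / 2 by norm_num, rpow_sub hW, rpow_neg_one, sqrt_eq_rpow]
        ring
    _ ≤ s⁻¹ / s / 2 := by
        gcongr
        · rw [div_le_iff₀ hW, inv_mul_eq_div, le_div_iff₀' hs]
          exact hsz
        · exact le_sqrt_of_sq_le (by rwa [sq])
    _ = (s * s)⁻¹ / 2 := by rw [mul_inv]; rfl

lemma differentiableAt_complexCoulombDeriv {ρ : ℝ} {z : ℂ} (hz : |z.im| < ρ) :
    DifferentiableAt ℂ (complexCoulombDeriv ρ) z := by
  have hre : 0 < ((ρ : ℂ) ^ 2 + z ^ 2).re := by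
    have := sq_lt_sq' (abs_lt.mp hz).1 (abs_lt.mp hz).2
    rw [Complex.add_re, ← Complex.ofReal_pow, Complex.ofReal_re, sq z, Complex.mul_re]
    nlinarith [sq_nonneg z.re]
  have hslit : (ρ : ℂ) ^ 2 + z ^ 2 ∈ Complex.slitPlane := Or.inl hre
  exact DifferentiableAt.mul (by fun_prop) (DifferentiableAt.cpow_const (by fun_prop) hslit)

section

variable {ρ : ℝ}

lemma hasDerivAt_coulomb (hρ : 0 < ρ) (t : ℝ) : HasDerivAt (coulomb ρ) (coulombDeriv ρ t) t := by
  have hbase : HasDerivAt (fun t : ℝ => ρ ^ 2 + t ^ 2) (2 * t) t := by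
    simpa using (hasDerivAt_pow 2 t).const_add (ρ ^ 2)
  have hpow := (hbase.rpow_const (p := -(1 / 2)) (Or.inl (by positivity))).div_const 2
  rw [show coulomb ρ = _ from funext (coulomb_eq_rpow ρ)]
  refine hpow.congr_deriv ?_
  rw [coulombDeriv, show (-(1 / 2) - 1 : ℝ) = -(3 / 2) by norm_num]
  ring

lemma continuous_coulomb (hρ : 0 < ρ) : Continuous (coulomb ρ) :=
  continuous_iff_continuousAt.mpr fun t => (hasDerivAt_coulomb hρ t).continuousAt

lemma hasDerivAt_arsinh_div (hρ : 0 < ρ) (t : ℝ) :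
    HasDerivAt (fun t => arsinh (t / ρ) / 2) (coulomb ρ t) t := by
  refine (((hasDerivAt_id t).div_const ρ).arsinh.div_const 2).congr_deriv ?_
  have hscale : ρ ^ 2 + t ^ 2 = ρ ^ 2 * (1 + (t / ρ) ^ 2) := by field_simp
  rw [coulomb, hscale, sqrt_mul (sq_nonneg ρ), sqrt_sq hρ.le, smul_eq_mul, id]
  ring

lemma integral_coulomb (hρ : 0 < ρ) (a b : ℝ) :
    ∫ t in a..b, coulomb ρ t = (arsinh (b / ρ) - arsinh (a / ρ)) / 2 := by
  rw [integral_eq_sub_of_hasDerivAt (fun t _ => hasDerivAt_arsinh_div hρ t)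
    ((continuous_coulomb hρ).intervalIntegrable a b), sub_div]

lemma abs_coulombDeriv_le (hρ : 0 < ρ) (t : ℝ) :
    |coulombDeriv ρ t| ≤ (ρ ^ 2 + t ^ 2)⁻¹ / 2 := by
  simpa [← ofReal_coulombDeriv] using
    norm_complexCoulombDeriv_le (ρ := ρ) (z := t) hρ (by simp)

lemma continuous_coulombDeriv (hρ : 0 < ρ) : Continuous (coulombDeriv ρ) :=
  Continuous.mul (by fun_prop) (Continuous.rpow_const (by fun_prop) fun t => Or.inl (by positivity))

lemma coulombDeriv_isBigO (hρ : 0 < ρ) :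
    coulombDeriv ρ =O[cocompact ℝ] fun t => |t| ^ (-2 : ℝ) := by
  refine .of_bound 1 ?_
  filter_upwards [isCompact_singleton.compl_mem_cocompact] with t (ht : t ≠ 0)
  have ht2 : 0 < t ^ 2 := by positivity
  rw [rpow_neg (abs_nonneg t), rpow_two, sq_abs, one_mul, norm_of_nonneg (inv_nonneg.mpr ht2.le)]
  calc |coulombDeriv ρ t| ≤ (ρ ^ 2 + t ^ 2)⁻¹ / 2 := abs_coulombDeriv_le hρ t
    _ ≤ (ρ ^ 2 + t ^ 2)⁻¹ := half_le_self (by positivity)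
    _ ≤ (t ^ 2)⁻¹ := by gcongr; nlinarith

lemma fourier_coulombDeriv_zero (ρ : ℝ) :
    𝓕 (fun t => (coulombDeriv ρ t : ℂ)) 0 = 0 := by
  have hodd : -∫ t, coulombDeriv ρ t = ∫ t, coulombDeriv ρ t := by
    simpa only [coulombDeriv_neg, MeasureTheory.integral_neg] using
      integral_neg_eq_self (coulombDeriv ρ) volume
  have hzero : ∫ t, (coulombDeriv ρ t : ℂ) = 0 :=
    integral_complex_ofReal.trans (by rw [neg_eq_self.mp hodd, Complex.ofReal_zero])
  simpa [Real.fourier_real_eq] using hzero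

lemma norm_fourier_coulombDeriv_le {δ : ℝ} (hδ : 0 < δ) (hδρ : δ ≤ ρ) (k : ℝ) :
    ‖𝓕 (fun t => (coulombDeriv ρ t : ℂ)) k‖ ≤
      exp (-(2 * π * |k| * (ρ - δ))) * ∫ t : ℝ, (δ ^ 2 + t ^ 2)⁻¹ / 2 := by
  simp_rw [ofReal_coulombDeriv]
  refine norm_fourier_le_of_strip (f := complexCoulombDeriv ρ) (fun z hz => ?_)
    ((integrable_inv_add_sq (by positivity)).div_const 2)
    (by simpa using (tendsto_inv_add_sq_cocompact (δ ^ 2)).div_const 2)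
    (fun z hz => norm_complexCoulombDeriv_le hδ hz) (sub_nonneg.mpr hδρ) k
  have hz' : |z.im| ≤ ρ - δ := hz
  exact (differentiableAt_complexCoulombDeriv (by linarith)).differentiableWithinAt

lemma norm_fourier_coulombDeriv_int_le {δ : ℝ} (hδ : 0 < δ) (hδρ : 2 * δ ≤ ρ) (n : ℤ) :
    ‖𝓕 (fun t => (coulombDeriv ρ t : ℂ)) n‖ ≤
      exp (-(2 * π) * ρ) * (exp (4 * π * δ) * (∫ t : ℝ, (δ ^ 2 + t ^ 2)⁻¹ / 2) *
        exp (-(2 * π * δ * |(n : ℝ)|))) := by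
  have : 0 ≤ ∫ t : ℝ, (δ ^ 2 + t ^ 2)⁻¹ / 2 := integral_nonneg fun t => by positivity
  rcases eq_or_ne n 0 with rfl | hn
  · rw [Int.cast_zero, fourier_coulombDeriv_zero, norm_zero]
    positivity
  · have hn1 : 1 ≤ |(n : ℝ)| := by exact_mod_cast Int.one_le_abs hn
    have hexponent : -(2 * π * |(n : ℝ)| * (ρ - δ)) ≤
        -(2 * π) * ρ + 4 * π * δ - 2 * π * δ * |(n : ℝ)| := by
      have : 0 ≤ π * ((|(n : ℝ)| - 1) * (ρ - 2 * δ)) :=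
        mul_nonneg pi_pos.le (mul_nonneg (by linarith) (by linarith))
      linarith
    refine (norm_fourier_coulombDeriv_le hδ (by linarith) n).trans ?_
    calc _ ≤ exp (-(2 * π) * ρ + 4 * π * δ - 2 * π * δ * |(n : ℝ)|) *
          ∫ t : ℝ, (δ ^ 2 + t ^ 2)⁻¹ / 2 := by gcongr
      _ = _ := by rw [sub_eq_add_neg, exp_add, exp_add]; ring

lemma exists_abs_tsum_coulombDeriv_le {r : ℝ} (hr : 0 < r) :
    ∃ C : ℝ, ∀ ρ, r ≤ ρ → ∀ x, |∑' n : ℤ, coulombDeriv ρ (x + n)| ≤ C * exp (-(2 * π) * ρ) := by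
  have hδ : 0 < r / 2 := half_pos hr
  have hsum := (summable_exp_neg_mul_abs_int (mul_pos two_pi_pos hδ)).mul_left
    (exp (4 * π * (r / 2)) * ∫ t : ℝ, ((r / 2) ^ 2 + t ^ 2)⁻¹ / 2)
  refine ⟨∑' n : ℤ, exp (4 * π * (r / 2)) * (∫ t : ℝ, ((r / 2) ^ 2 + t ^ 2)⁻¹ / 2) *
    exp (-(2 * π * (r / 2) * |(n : ℝ)|)), fun ρ hρ x => ?_⟩
  have hρ0 : 0 < ρ := hr.trans_le hρ
  have hpoisson := norm_tsum_int_add_le_of_norm_fourier_le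
    (Complex.continuous_ofReal.comp (continuous_coulombDeriv hρ0)) one_lt_two
    (Complex.isBigO_ofReal_left.mpr (coulombDeriv_isBigO hρ0)) (hsum.mul_left _)
    (norm_fourier_coulombDeriv_int_le hδ (by linarith)) x
  rw [tsum_mul_left, mul_comm] at hpoisson
  simpa [← Complex.ofReal_tsum] using hpoisson

end

/-- The `n`-th term of the regularised Coulomb series, with no exception made at `n = 0`: there the
subtracted `1 / (2 * |n|)` is `0` by the convention for division by zero. -/
noncomputable def regTerm (ρ x : ℝ) (n : ℤ) : ℝ := coulomb ρ (x + n) - 1 / (2 * |(n : ℝ)|)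

/-- The Ooguri–Vafa potential for `A = 0`, as a function of `x` and of `ρ = √(μ ^ 2 + y ^ 2)`. -/
noncomputable def regSum (ρ x : ℝ) : ℝ := ∑' n : ℤ, regTerm ρ x n

lemma eventually_abs_regTerm_le (R : ℝ) : ∀ᶠ n : ℤ in cofinite,
    ∀ ρ x : ℝ, ‖(x + ρ * Complex.I : ℂ)‖ ≤ R → |regTerm ρ x n| ≤ R * (1 / (n : ℝ) ^ 2) := by
  have hlarge : Tendsto (fun n : ℤ => |(n : ℝ)|) cofinite atTop :=
    (tendsto_norm_cocompact_atTop (E := ℝ)).comp Int.tendsto_coe_cofinite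
  filter_upwards [hlarge.eventually_gt_atTop 0, hlarge.eventually_ge_atTop (2 * R)]
    with n hn0 hnR ρ x hR
  have hnorm : ‖(n : ℂ)‖ = |(n : ℝ)| := Complex.norm_intCast n
  have hregTerm : regTerm ρ x n =
      (‖(x + ρ * Complex.I : ℂ) + n‖⁻¹ - ‖(n : ℂ)‖⁻¹) / 2 := by
    rw [regTerm, coulomb_eq_inv_norm, hnorm]
    push_cast
    ring_nf
  have hbound := abs_inv_norm_add_sub_inv_norm_le
    (v := (n : ℂ)) (w := x + ρ * Complex.I) (by rwa [hnorm])
    (by rw [hnorm]; linarith)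
  rw [hregTerm, abs_div, abs_two, div_le_iff₀ two_pos]
  refine hbound.trans ?_
  rw [hnorm, sq_abs]
  calc _ ≤ 2 * R / (n : ℝ) ^ 2 := by gcongr
    _ = _ := by ring

lemma summable_regTerm (ρ x : ℝ) : Summable (regTerm ρ x) :=
  .of_norm_bounded_eventually ((Real.summable_one_div_int_pow.mpr one_lt_two).mul_left _)
    ((eventually_abs_regTerm_le _).mono fun _ hn => hn ρ x le_rfl)

lemma regSum_periodic (ρ : ℝ) : Function.Periodic (regSum ρ) 1 := by
  intro x
  have hshift : Summable fun n : ℤ => regTerm ρ x (n + 1) :=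
    (Equiv.addRight (1 : ℤ)).summable_iff.mpr (summable_regTerm ρ x)
  have hdiff (n : ℤ) : regTerm ρ (x + 1) n - regTerm ρ x (n + 1) =
      1 / (2 * |((n + 1 : ℤ) : ℝ)|) - 1 / (2 * |(n : ℝ)|) := by
    rw [regTerm, regTerm, show x + ((n + 1 : ℤ) : ℝ) = x + 1 + n by push_cast; ring]
    ring
  have hzero : regSum ρ (x + 1) - ∑' n : ℤ, regTerm ρ x (n + 1) = 0 := by
    rw [regSum, ← (summable_regTerm ρ (x + 1)).tsum_sub hshift, tsum_congr hdiff]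
    exact tsum_add_one_sub_eq_zero_of_even (g := fun n : ℤ => 1 / (2 * |(n : ℝ)|))
      fun n => by simp
  rw [sub_eq_zero.mp hzero]
  exact (Equiv.addRight (1 : ℤ)).tsum_eq (regTerm ρ x)

section

variable {ρ : ℝ}

lemma hasDerivAt_regTerm (hρ : 0 < ρ) (n : ℤ) (x : ℝ) :
    HasDerivAt (fun x => regTerm ρ x n) (coulombDeriv ρ (x + n)) x :=
  ((hasDerivAt_coulomb hρ _).comp_add_const x n).sub_const _

lemma abs_coulombDeriv_add_le (hρ : 0 < ρ) {R y : ℝ} (hy : |y| ≤ R) (s : ℝ) :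
    |coulombDeriv ρ (y + s)| ≤ (1 + R ^ 2 / ρ ^ 2) * (ρ ^ 2 + s ^ 2)⁻¹ := by
  have hyR : y ^ 2 ≤ R ^ 2 := sq_le_sq' (abs_le.mp hy).1 (abs_le.mp hy).2
  have hcompare : ρ ^ 2 + s ^ 2 ≤ 2 * (1 + R ^ 2 / ρ ^ 2) * (ρ ^ 2 + (y + s) ^ 2) := by
    have hexpand : 2 * (1 + R ^ 2 / ρ ^ 2) * (ρ ^ 2 + (y + s) ^ 2) =
        2 * (ρ ^ 2 + (y + s) ^ 2) + 2 * R ^ 2 + 2 * (R ^ 2 / ρ ^ 2) * (y + s) ^ 2 := by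
      field_simp
      ring
    have : 0 ≤ 2 * (R ^ 2 / ρ ^ 2) * (y + s) ^ 2 := by positivity
    nlinarith [sq_nonneg (2 * y + s), sq_nonneg ρ]
  refine (abs_coulombDeriv_le hρ _).trans ?_
  rw [← div_eq_mul_inv, le_div_iff₀ (by positivity), div_mul_eq_mul_div, inv_mul_eq_div,
    div_le_iff₀ two_pos, div_le_iff₀ (by positivity)]
  linarith

lemma hasDerivAt_regSum (hρ : 0 < ρ) (x : ℝ) :
    HasDerivAt (regSum ρ) (∑' n : ℤ, coulombDeriv ρ (x + n)) x := by
  have hx : x ∈ Metric.ball (0 : ℝ) (|x| + 1) := by simp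
  refine hasDerivAt_tsum_of_isPreconnected
    ((summable_inv_add_int_sq (sq_nonneg ρ)).mul_left (1 + (|x| + 1) ^ 2 / ρ ^ 2))
    Metric.isOpen_ball (convex_ball 0 _).isPreconnected
    (fun n y _ => hasDerivAt_regTerm hρ n y) (fun n y hy => ?_) hx (summable_regTerm ρ x) hx
  have hy' : |y| < |x| + 1 := by simpa using hy
  exact abs_coulombDeriv_add_le hρ hy'.le n

lemma integral_regTerm (hρ : 0 < ρ) (n : ℤ) : ∫ x in 0..1, regTerm ρ x n =
    (arsinh ((n + 1) / ρ) - arsinh (n / ρ)) / 2 - 1 / (2 * |(n : ℝ)|) := by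
  simp only [regTerm]
  have hint : IntervalIntegrable (fun x => coulomb ρ (x + n)) volume 0 1 :=
    ((continuous_coulomb hρ).comp (by fun_prop)).intervalIntegrable _ _
  rw [integral_sub hint intervalIntegrable_const, integral_comp_add_right (coulomb ρ),
    integral_coulomb hρ]
  simp [add_comm]

lemma hasSum_integral_regTerm (hρ : 0 < ρ) :
    HasSum (fun n : ℤ => ∫ x in 0..1, regTerm ρ x n) (∫ x in 0..1, regSum ρ x) := by
  have hcont (n : ℤ) : Continuous fun x => regTerm ρ x n :=
    continuous_iff_continuousAt.mpr fun x => (hasDerivAt_regTerm hρ n x).continuousAt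
  refine hasSum_intervalIntegral_of_summable_norm (f := fun n => ⟨_, hcont n⟩) ?_
  refine .of_norm_bounded_eventually
    ((Real.summable_one_div_int_pow.mpr one_lt_two).mul_left (1 + ρ)) ?_
  filter_upwards [eventually_abs_regTerm_le (1 + ρ)] with n hn
  rw [norm_norm, ContinuousMap.norm_le _ (by positivity)]
  rintro ⟨x, hx⟩
  replace hx : 0 ≤ x ∧ x ≤ 1 := by simpa using hx
  refine hn ρ x ((norm_add_le _ _).trans ?_)
  simpa [abs_of_nonneg hx.1, abs_of_pos hρ] using hx.2

lemma sum_range_integral_regTerm (hρ : 0 < ρ) (N : ℕ) :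
    ∑ n ∈ Finset.range N,
      ((∫ x in 0..1, regTerm ρ x n) + ∫ x in 0..1, regTerm ρ x (-(n + 1))) =
    arsinh (N / ρ) - harmonic N + 1 / (2 * N) := by
  induction N with
  | zero => simp
  | succ N ih =>
    rw [Finset.sum_range_succ, ih, integral_regTerm hρ, integral_regTerm hρ, harmonic_succ]
    push_cast
    rw [show (-((N : ℝ) + 1) + 1) / ρ = -(N / ρ) by ring, neg_div, arsinh_neg, arsinh_neg, abs_neg,
      abs_of_nonneg (by positivity : (0 : ℝ) ≤ N), abs_of_nonneg (by positivity : (0 : ℝ) ≤ N + 1)]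
    field_simp
    ring

lemma tendsto_arsinh_div_sub_harmonic (hρ : 0 < ρ) :
    Tendsto (fun N : ℕ => arsinh (N / ρ) - harmonic N + 1 / (2 * N)) atTop
      (𝓝 (log 2 - log ρ - eulerMascheroniConstant)) := by
  have harsinh := tendsto_arsinh_sub_log_atTop.comp
    (tendsto_natCast_atTop_atTop.atTop_div_const hρ)
  have hcorrection : Tendsto (fun N : ℕ => 1 / (2 * (N : ℝ))) atTop (𝓝 0) := by
    simpa using (tendsto_inv_atTop_nhds_zero_nat (𝕜 := ℝ)).mul_const 2⁻¹
  have hlim := ((harsinh.sub_const (log ρ)).sub tendsto_harmonic_sub_log).add hcorrection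
  rw [add_zero] at hlim
  refine hlim.congr' ?_
  filter_upwards [eventually_gt_atTop 0] with N hN
  rw [Function.comp_apply, log_div (by positivity) hρ.ne']
  ring

lemma integral_regSum (hρ : 0 < ρ) :
    ∫ x in 0..1, regSum ρ x = log 2 - log ρ - eulerMascheroniConstant := by
  have hpartial := (hasSum_integral_regTerm hρ).nat_add_neg_add_one.tendsto_sum_nat
  simp only [sum_range_integral_regTerm hρ] at hpartial
  exact tendsto_nhds_unique hpartial (tendsto_arsinh_div_sub_harmonic hρ)

lemma exists_abs_regSum_sub_le {r : ℝ} (hr : 0 < r) :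
    ∃ C : ℝ, ∀ ρ, r ≤ ρ → ∀ x,
      |regSum ρ x - (log 2 - log ρ - eulerMascheroniConstant)| ≤ C * exp (-(2 * π) * ρ) := by
  obtain ⟨C, hC⟩ := exists_abs_tsum_coulombDeriv_le hr
  refine ⟨C, fun ρ hρ x => ?_⟩
  have hρ0 : 0 < ρ := hr.trans_le hρ
  simpa [integral_regSum hρ0] using norm_smul_sub_integral_le_of_periodic zero_le_one
    (regSum_periodic ρ) (hasDerivAt_regSum hρ0) (hC ρ hρ) x

end

lemma OVterm_eq_regTerm (μ x y : ℝ) {n : ℤ} (hn : n ≠ 0) :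
    OVterm μ x y n = regTerm √(μ ^ 2 + y ^ 2) x n := by
  rw [OVterm, if_neg hn, regTerm, coulomb, sq_sqrt (by positivity), add_right_comm]

lemma summable_OVterm (μ x y : ℝ) : Summable (OVterm μ x y) := by
  refine (summable_congr_cofinite ?_).mp (summable_regTerm √(μ ^ 2 + y ^ 2) x)
  exact (eventually_cofinite_ne 0).mono fun n hn => (OVterm_eq_regTerm μ x y hn).symm

lemma OVpot_eq_add_regSum (A μ x y : ℝ) :
    OVpot A μ x y = A + regSum √(μ ^ 2 + y ^ 2) x := by
  rw [OVpot, regSum, (summable_regTerm _ x).tsum_eq_add_tsum_ite 0, add_assoc]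
  congr 2
  · rw [regTerm, coulomb, sq_sqrt (by positivity), add_right_comm]
    simp
  · refine tsum_congr fun n => ?_
    split_ifs with hn
    · simp [OVterm, hn]
    · exact OVterm_eq_regTerm μ x y hn

end OoguriVafa

theorem statement10_general {r : ℝ} (hr : 0 < r) : ∃ C : ℝ, 0 < C ∧ ∀ A μ x y : ℝ,
    (∀ n : ℤ, ¬(μ = 0 ∧ x + n = 0 ∧ y = 0)) →
    Summable (fun n : ℤ => |OVterm μ x y n|) ∧
    OVpot A μ (x + 1) y = OVpot A μ x y ∧
    (r ≤ μ ^ 2 + y ^ 2 →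
      |OVpot A μ x y - A + Real.eulerMascheroniConstant - Real.log 2
          + (1 / 2) * Real.log (μ ^ 2 + y ^ 2)|
        ≤ C * Real.exp (-(2 * Real.pi) * Real.sqrt (μ ^ 2 + y ^ 2))) := by
  obtain ⟨C, hC⟩ := OoguriVafa.exists_abs_regSum_sub_le (Real.sqrt_pos.mpr hr)
  refine ⟨max C 1, by positivity, fun A μ x y _ =>
    ⟨(OoguriVafa.summable_OVterm μ x y).abs, ?_, fun hμy => ?_⟩⟩
  · rw [OoguriVafa.OVpot_eq_add_regSum, OoguriVafa.OVpot_eq_add_regSum,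
      OoguriVafa.regSum_periodic]
  · have hbound := hC _ (Real.sqrt_le_sqrt hμy) x
    rw [Real.log_sqrt (by positivity)] at hbound
    rw [OoguriVafa.OVpot_eq_add_regSum]
    calc _ ≤ C * Real.exp (-(2 * Real.pi) * Real.sqrt (μ ^ 2 + y ^ 2)) := by
          convert hbound using 2
          ring
      _ ≤ _ := by gcongr; exact le_max_left C 1

/-- the Ooguri–Vafa potential series converges absolutely, is 1-periodic
in `x`, and decays exponentially to the semiflat potential
`A − γ_E + log 2 − (1/2)log(μ² + y²)` for `μ² + y² ≥ 1`, with a constant independent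
of `A`. -/
theorem statement10 : ∃ C : ℝ, 0 < C ∧ ∀ A μ x y : ℝ, 0 < A →
    (∀ n : ℤ, ¬(μ = 0 ∧ x + n = 0 ∧ y = 0)) →
    Summable (fun n : ℤ => |OVterm μ x y n|) ∧
    OVpot A μ (x + 1) y = OVpot A μ x y ∧
    (1 ≤ μ ^ 2 + y ^ 2 →
      |OVpot A μ x y - A + Real.eulerMascheroniConstant - Real.log 2
          + (1 / 2) * Real.log (μ ^ 2 + y ^ 2)|
        ≤ C * Real.exp (-(2 * Real.pi) * Real.sqrt (μ ^ 2 + y ^ 2))) := by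
  obtain ⟨C, hC, h⟩ := statement10_general one_pos
  exact ⟨C, hC, fun A μ x y _ => h A μ x y⟩
end

section
/- There is a constant C > 0 such that for every p with 1 ≤ p ≤ 3/2 and every continuously differentiable compactly supported function u : ℝ⁴ → ℝ, the weighted Sobolev inequality ( ∫_{ℝ⁴} |u(x)|^{2p} (1 + |x|)^{2p−4} dx )^{1/p} ≤ C ∫_{ℝ⁴} |∇u(x)|² dx holds, where |x| is the Euclidean norm and |∇u| the Euclidean norm of the gradient. -/
open MeasureTheory

/-!
Integrating the divergence of the compactly supported field `x ↦ (‖u x‖² / (1 + ‖x‖²)) x` over an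
`n`-dimensional space and completing a square gives Hardy's inequality
`((n - 2) / 2)² ∫ ‖u‖² / (1 + ‖x‖²) ≤ ∫ ‖Du‖²`. By Hölder's inequality the weighted integral of
`‖u‖^(2p)` is at most `H ^ a * S ^ (1 - a)`, where `H = ∫ ‖u‖² / (1 + ‖x‖)²`,
`S = ∫ ‖u‖^(2n/(n-2))` and `a = (n - p (n - 2)) / 2`; bounding `H` by Hardy and `S` by Sobolev
with the same constant `C` yields exactly `(C ∫ ‖Du‖²) ^ p`.
-/

section WeightedSobolev

open Module
open scoped NNReal RealInnerProductSpace

theorem integral_rpow_mul_rpow_le {α : Type*} [MeasurableSpace α] {μ : Measure α} {f g : α → ℝ}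
    (hf : Integrable f μ) (hg : Integrable g μ) (hf₀ : 0 ≤ f) (hg₀ : 0 ≤ g)
    {a b : ℝ} (ha : 0 ≤ a) (hb : 0 ≤ b) (hab : a + b = 1) :
    ∫ x, f x ^ a * g x ^ b ∂μ ≤ (∫ x, f x ∂μ) ^ a * (∫ x, g x ∂μ) ^ b := by
  have hF : 0 ≤ ∫ x, f x ∂μ := integral_nonneg hf₀
  have hG : 0 ≤ ∫ x, g x ∂μ := integral_nonneg hg₀
  have holder := ENNReal.lintegral_mul_norm_pow_le hf.aemeasurable.ennreal_ofReal
    hg.aemeasurable.ennreal_ofReal ha hb hab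
  rw [← ofReal_integral_eq_lintegral_ofReal hf (.of_forall hf₀),
    ← ofReal_integral_eq_lintegral_ofReal hg (.of_forall hg₀),
    ENNReal.ofReal_rpow_of_nonneg hF ha, ENNReal.ofReal_rpow_of_nonneg hG hb,
    ← ENNReal.ofReal_mul (by positivity)] at holder
  rw [integral_eq_lintegral_of_nonneg_ae
    (.of_forall fun x ↦ mul_nonneg (Real.rpow_nonneg (hf₀ x) a) (Real.rpow_nonneg (hg₀ x) b))
    ((hf.aemeasurable.pow_const a).mul (hg.aemeasurable.pow_const b)).aestronglyMeasurable]
  refine ENNReal.toReal_le_of_le_ofReal (by positivity) (le_of_eq_of_le ?_ holder)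
  refine lintegral_congr fun x ↦ ?_
  rw [ENNReal.ofReal_rpow_of_nonneg (hf₀ x) ha, ENNReal.ofReal_rpow_of_nonneg (hg₀ x) hb,
    ENNReal.ofReal_mul (Real.rpow_nonneg (hf₀ x) a)]

theorem integrable_norm_sq_div {X F : Type*} [TopologicalSpace X] [MeasurableSpace X]
    [OpensMeasurableSpace X] [NormedAddCommGroup F] {μ : Measure X} [IsFiniteMeasureOnCompacts μ]
    {u : X → F} {w : X → ℝ} (hu : Continuous u) (hc : HasCompactSupport u) (hw : Continuous w)
    (hw₀ : ∀ x, w x ≠ 0) : Integrable (fun x ↦ ‖u x‖ ^ 2 / w x) μ :=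
  ((hu.norm.pow 2).div hw hw₀).integrable_of_hasCompactSupport
    (hc.mono fun x ↦ by simp +contextual)

section Euler

variable {E G : Type*} [NormedAddCommGroup E] [NormedSpace ℝ E] [MeasurableSpace E] [BorelSpace E]
  {μ : Measure E} [NormedAddCommGroup G] [NormedSpace ℝ G] {f : E → G}

theorem integrable_norm_fderiv_sq [IsFiniteMeasureOnCompacts μ] (hf : ContDiff ℝ 1 f)
    (hc : HasCompactSupport f) : Integrable (fun x ↦ ‖fderiv ℝ f x‖ ^ 2) μ := by
  have hdf : Continuous (fderiv ℝ f) := hf.continuous_fderiv one_ne_zero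
  have hsupp : HasCompactSupport fun x ↦ ‖fderiv ℝ f x‖ ^ 2 :=
    (hc.fderiv ℝ).norm.mono fun x ↦ by simp
  exact (hdf.norm.pow 2).integrable_of_hasCompactSupport hsupp

theorem integrable_smul_fderiv_apply [IsFiniteMeasureOnCompacts μ] (hf : ContDiff ℝ 1 f)
    (hc : HasCompactSupport f) (l : E →L[ℝ] ℝ) (v : E) :
    Integrable (fun x ↦ l x • fderiv ℝ f x v) μ :=
  (l.continuous.smul ((hf.continuous_fderiv one_ne_zero).clm_apply
    continuous_const)).integrable_of_hasCompactSupport (hc.fderiv_apply ℝ v).smul_left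

theorem integrable_fderiv_apply_self [IsFiniteMeasureOnCompacts μ] (hf : ContDiff ℝ 1 f)
    (hc : HasCompactSupport f) : Integrable (fun x ↦ fderiv ℝ f x x) μ :=
  ((hf.continuous_fderiv one_ne_zero).clm_apply continuous_id).integrable_of_hasCompactSupport <|
    (hc.fderiv ℝ).mono fun x ↦ mt fun hx ↦ by simp_all

variable [FiniteDimensional ℝ E] [μ.IsAddHaarMeasure]

theorem integral_smul_fderiv_apply (hf : ContDiff ℝ 1 f) (hc : HasCompactSupport f)
    (l : E →L[ℝ] ℝ) (v : E) : ∫ x, l x • fderiv ℝ f x v ∂μ = -(l v • ∫ x, f x ∂μ) := by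
  have hfi : Integrable f μ := hf.continuous.integrable_of_hasCompactSupport hc
  have hlf : Integrable (fun x ↦ l x • f x) μ :=
    (l.continuous.smul hf.continuous).integrable_of_hasCompactSupport hc.smul_left
  rw [integral_smul_fderiv_eq_neg_fderiv_smul_of_integrable
    (by simpa only [ContinuousLinearMap.fderiv] using hfi.fun_smul (l v))
    (integrable_smul_fderiv_apply hf hc l v) hlf
    (fun x _ ↦ l.differentiableAt) (fun x _ ↦ hf.differentiable one_ne_zero x)]
  simp only [ContinuousLinearMap.fderiv, integral_smul]

theorem integral_fderiv_apply_self (hf : ContDiff ℝ 1 f) (hc : HasCompactSupport f) :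
    ∫ x, fderiv ℝ f x x ∂μ = -((finrank ℝ E : ℝ) • ∫ x, f x ∂μ) := by
  let b := finBasis ℝ E
  let l (i : Fin (finrank ℝ E)) : E →L[ℝ] ℝ := (b.coord i).toContinuousLinearMap
  have hsum (x : E) : fderiv ℝ f x x = ∑ i, l i x • fderiv ℝ f x (b i) := by
    conv_lhs => arg 2; rw [← b.sum_repr x]
    simp only [map_sum, map_smul]
    rfl
  have hl (i : Fin (finrank ℝ E)) : l i (b i) = 1 := by simp [l]
  simp only [hsum]
  rw [integral_finsetSum _ fun i _ ↦ integrable_smul_fderiv_apply hf hc _ _]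
  simp only [integral_smul_fderiv_apply hf hc, hl, one_smul, Finset.sum_const, Finset.card_univ,
    Fintype.card_fin, smul_neg, Nat.cast_smul_eq_nsmul]

end Euler

section Hardy

variable {E F : Type*} [NormedAddCommGroup E] [InnerProductSpace ℝ E]
  [NormedAddCommGroup F] [InnerProductSpace ℝ F] {u : E → F}

theorem fderiv_norm_sq_div_one_add_norm_sq_apply_self {x : E} (hu : DifferentiableAt ℝ u x) :
    fderiv ℝ (fun y ↦ ‖u y‖ ^ 2 / (1 + ‖y‖ ^ 2)) x x =
      2 * ⟪u x, fderiv ℝ u x x⟫ / (1 + ‖x‖ ^ 2) -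
        2 * (‖u x‖ * ‖x‖ / (1 + ‖x‖ ^ 2)) ^ 2 := by
  have hpos : 1 + ‖x‖ ^ 2 ≠ 0 := by positivity
  have hinv : HasFDerivAt (fun y : E ↦ (1 + ‖y‖ ^ 2)⁻¹) _ x :=
    (hasDerivAt_inv hpos).comp_hasFDerivAt x ((hasFDerivAt_id (𝕜 := ℝ) x).norm_sq.const_add 1)
  simp only [div_eq_mul_inv]
  rw [(hu.hasFDerivAt.norm_sq.fun_mul hinv).fderiv]
  simp only [id_eq, ContinuousLinearMap.comp_id, neg_smul, smul_neg, add_apply, neg_apply,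
    smul_apply, ContinuousLinearMap.comp_apply, coe_innerSL_apply, inner_self_eq_norm_sq_to_K,
    Real.ringHom_apply, nsmul_eq_mul, Nat.cast_ofNat, smul_eq_mul]
  field_simp
  ring

theorem neg_mul_fderiv_norm_sq_div_apply_self_le {x : E} (hu : DifferentiableAt ℝ u x) {c : ℝ}
    (hc₀ : 0 ≤ c) :
    -(c * fderiv ℝ (fun y ↦ ‖u y‖ ^ 2 / (1 + ‖y‖ ^ 2)) x x) ≤
      c * (c + 2) * (‖u x‖ ^ 2 / (1 + ‖x‖ ^ 2)) + ‖fderiv ℝ u x‖ ^ 2 := by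
  rw [fderiv_norm_sq_div_one_add_norm_sq_apply_self hu]
  set q := ‖u x‖ * ‖x‖ / (1 + ‖x‖ ^ 2) with q_def
  have hq : q ^ 2 ≤ ‖u x‖ ^ 2 / (1 + ‖x‖ ^ 2) := by
    rw [q_def, div_pow, div_le_div_iff₀ (by positivity) (by positivity)]
    nlinarith [show 0 ≤ ‖u x‖ ^ 2 * (1 + ‖x‖ ^ 2) by positivity]
  have hinner : -⟪u x, fderiv ℝ u x x⟫ ≤ ‖u x‖ * (‖fderiv ℝ u x‖ * ‖x‖) :=
    calc -⟪u x, fderiv ℝ u x x⟫ ≤ ‖u x‖ * ‖fderiv ℝ u x x‖ :=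
          (neg_le_abs _).trans (abs_real_inner_le_norm _ _)
      _ ≤ _ := by gcongr; exact (fderiv ℝ u x).le_opNorm x
  calc -(c * (2 * ⟪u x, fderiv ℝ u x x⟫ / (1 + ‖x‖ ^ 2) - 2 * q ^ 2))
      = 2 * c / (1 + ‖x‖ ^ 2) * -⟪u x, fderiv ℝ u x x⟫ + 2 * c * q ^ 2 := by ring
    _ ≤ 2 * c / (1 + ‖x‖ ^ 2) * (‖u x‖ * (‖fderiv ℝ u x‖ * ‖x‖)) + 2 * c * q ^ 2 := by gcongr
    _ = 2 * (c * q) * ‖fderiv ℝ u x‖ + 2 * c * q ^ 2 := by rw [q_def]; ring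
    _ ≤ ((c * q) ^ 2 + ‖fderiv ℝ u x‖ ^ 2) + 2 * c * q ^ 2 := by
        gcongr; exact two_mul_le_add_sq _ _
    _ = c * (c + 2) * q ^ 2 + ‖fderiv ℝ u x‖ ^ 2 := by ring
    _ ≤ _ := by gcongr

variable [FiniteDimensional ℝ E] [MeasurableSpace E] [BorelSpace E] {μ : Measure E}
  [μ.IsAddHaarMeasure]

theorem hardy_inequality_one_add_norm_sq (hn : 2 ≤ finrank ℝ E) (hu : ContDiff ℝ 1 u)
    (hc : HasCompactSupport u) :
    (((finrank ℝ E : ℝ) - 2) / 2) ^ 2 * ∫ x, ‖u x‖ ^ 2 / (1 + ‖x‖ ^ 2) ∂μ ≤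
      ∫ x, ‖fderiv ℝ u x‖ ^ 2 ∂μ := by
  set h : E → ℝ := fun x ↦ ‖u x‖ ^ 2 / (1 + ‖x‖ ^ 2)
  have hh : ContDiff ℝ 1 h :=
    (hu.norm_sq ℝ).div (contDiff_const.add (contDiff_norm_sq ℝ)) fun x ↦ by positivity
  have hhc : HasCompactSupport h := hc.mono fun x ↦ by simp +contextual [h]
  set c : ℝ := ((finrank ℝ E : ℝ) - 2) / 2 with c_def
  have hc₀ : 0 ≤ c := by
    have : (2 : ℝ) ≤ finrank ℝ E := mod_cast hn
    linarith
  have hhi : Integrable h μ := hh.continuous.integrable_of_hasCompactSupport hhc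
  have hDu := integrable_norm_fderiv_sq (μ := μ) hu hc
  have key : ∫ x, -(c * fderiv ℝ h x x) ∂μ ≤
      ∫ x, c * (c + 2) * h x + ‖fderiv ℝ u x‖ ^ 2 ∂μ :=
    integral_mono ((integrable_fderiv_apply_self hh hhc).const_mul c).neg
      ((hhi.const_mul _).add hDu) fun x ↦
        neg_mul_fderiv_norm_sq_div_apply_self_le (hu.differentiable one_ne_zero x) hc₀
  rw [integral_neg, integral_const_mul, integral_fderiv_apply_self hh hhc,
    integral_add (hhi.const_mul _) hDu, integral_const_mul, smul_eq_mul] at key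
  have hdim : (finrank ℝ E : ℝ) = 2 * c + 2 := by rw [c_def]; ring
  rw [hdim] at key
  linear_combination key

theorem hardy_inequality_one_add_norm (hn : 2 < finrank ℝ E) (hu : ContDiff ℝ 1 u)
    (hc : HasCompactSupport u) :
    ∫ x, ‖u x‖ ^ 2 / (1 + ‖x‖) ^ 2 ∂μ ≤
      (2 / ((finrank ℝ E : ℝ) - 2)) ^ 2 * ∫ x, ‖fderiv ℝ u x‖ ^ 2 ∂μ := by
  have hpos : 0 < (finrank ℝ E : ℝ) - 2 := sub_pos.2 (mod_cast hn)
  have hint : Integrable (fun x ↦ ‖u x‖ ^ 2 / (1 + ‖x‖ ^ 2)) μ :=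
    integrable_norm_sq_div hu.continuous hc (by fun_prop) fun x ↦ by positivity
  calc ∫ x, ‖u x‖ ^ 2 / (1 + ‖x‖) ^ 2 ∂μ
      ≤ ∫ x, ‖u x‖ ^ 2 / (1 + ‖x‖ ^ 2) ∂μ := by
        refine integral_mono_of_nonneg (.of_forall fun x ↦ by positivity) hint
          (.of_forall fun x ↦ ?_)
        dsimp only
        gcongr
        nlinarith [norm_nonneg x]
    _ = (2 / ((finrank ℝ E : ℝ) - 2)) ^ 2 * ((((finrank ℝ E : ℝ) - 2) / 2) ^ 2 *
          ∫ x, ‖u x‖ ^ 2 / (1 + ‖x‖ ^ 2) ∂μ) := by field_simp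
    _ ≤ _ := by gcongr; exact hardy_inequality_one_add_norm_sq hn.le hu hc

end Hardy

section Sobolev

variable {E F : Type*} [NormedAddCommGroup E] [NormedSpace ℝ E] [FiniteDimensional ℝ E]
  [MeasurableSpace E] [BorelSpace E] {μ : Measure E} [μ.IsAddHaarMeasure]
  [NormedAddCommGroup F] [InnerProductSpace ℝ F] {u : E → F}

theorem sobolev_inequality_rpow (hu : ContDiff ℝ 1 u)
    (hc : HasCompactSupport u) {p p' : ℝ≥0} (hp : 1 ≤ p) (hp'₀ : p' ≠ 0) (hn : 0 < finrank ℝ E)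
    (hp' : (p' : ℝ)⁻¹ = (p : ℝ)⁻¹ - (finrank ℝ E : ℝ)⁻¹) :
    (∫ x, ‖u x‖ ^ (p' : ℝ) ∂μ) ^ (p' : ℝ)⁻¹ ≤
      eLpNormLESNormFDerivOfEqInnerConst μ p * (∫ x, ‖fderiv ℝ u x‖ ^ (p : ℝ) ∂μ) ^ (p : ℝ)⁻¹ := by
  have hp₀ : p ≠ 0 := (zero_lt_one.trans_le hp).ne'
  have hLp : MemLp u p' μ := hu.continuous.memLp_of_hasCompactSupport hc
  have hLp_fderiv : MemLp (fderiv ℝ u) p μ :=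
    (hu.continuous_fderiv one_ne_zero).memLp_of_hasCompactSupport (hc.fderiv ℝ)
  have sobolev := eLpNorm_le_eLpNorm_fderiv_of_eq_inner μ hu hc hp hn hp'
  rwa [hLp.eLpNorm_eq_integral_rpow_norm (mod_cast hp'₀) ENNReal.coe_ne_top,
    hLp_fderiv.eLpNorm_eq_integral_rpow_norm (mod_cast hp₀) ENNReal.coe_ne_top,
    ← ENNReal.ofReal_coe_nnreal (p := eLpNormLESNormFDerivOfEqInnerConst μ p),
    ← ENNReal.ofReal_mul NNReal.zero_le_coe,
    ENNReal.ofReal_le_ofReal_iff (by positivity), ENNReal.coe_toReal, ENNReal.coe_toReal] at sobolev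

theorem sobolev_inequality_sq (hn : 2 < finrank ℝ E)
    (hu : ContDiff ℝ 1 u) (hc : HasCompactSupport u) :
    (∫ x, ‖u x‖ ^ (2 * finrank ℝ E / (finrank ℝ E - 2) : ℝ) ∂μ) ^
        ((finrank ℝ E - 2) / finrank ℝ E : ℝ) ≤
      eLpNormLESNormFDerivOfEqInnerConst μ 2 ^ 2 * ∫ x, ‖fderiv ℝ u x‖ ^ 2 ∂μ := by
  have hn₂ : (finrank ℝ E : ℝ) - 2 ≠ 0 := (sub_pos.2 (mod_cast hn)).ne'
  have hn₀ : (finrank ℝ E : ℝ) ≠ 0 := Nat.cast_ne_zero.2 (by lia)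
  obtain ⟨q, hq⟩ : ∃ q : ℝ≥0, (q : ℝ) = 2 * finrank ℝ E / (finrank ℝ E - 2) :=
    ⟨⟨_, div_nonneg (by positivity) (sub_nonneg.2 (mod_cast hn.le))⟩, rfl⟩
  have hq₀ : q ≠ 0 := NNReal.coe_ne_zero.1 (by rw [hq]; positivity)
  have hq_conj : (q : ℝ)⁻¹ = ((2 : ℝ≥0) : ℝ)⁻¹ - (finrank ℝ E : ℝ)⁻¹ := by
    rw [hq, NNReal.coe_ofNat]
    field_simp
  have hq_two : (q : ℝ)⁻¹ * 2 = (finrank ℝ E - 2) / finrank ℝ E := by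
    rw [hq]
    field_simp
  have hS : 0 ≤ ∫ x, ‖u x‖ ^ (q : ℝ) ∂μ := integral_nonneg fun x ↦ by positivity
  have hD : 0 ≤ ∫ x, ‖fderiv ℝ u x‖ ^ 2 ∂μ := integral_nonneg fun x ↦ by positivity
  have sobolev := sobolev_inequality_rpow (μ := μ) hu hc one_le_two hq₀
    (by lia) hq_conj
  have sobolev_sq := pow_le_pow_left₀ (by positivity) sobolev 2
  rw [← hq]
  simpa only [NNReal.coe_ofNat, mul_pow, ← Real.rpow_mul_natCast hS, Nat.cast_ofNat, hq_two,
    Real.rpow_two, ← Real.rpow_mul_natCast hD, inv_mul_cancel₀ (two_ne_zero' ℝ), Real.rpow_one]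
    using sobolev_sq

end Sobolev

section Interpolation

theorem rpow_mul_rpow_eq_div_rpow_mul_rpow {n p t w : ℝ} (hn : 2 < n) (hp : 0 < p) (ht : 0 ≤ t)
    (hw : 0 < w) :
    t ^ (2 * p) * w ^ (p * (n - 2) - n) =
      (t ^ 2 / w ^ 2) ^ ((n - p * (n - 2)) / 2) *
        (t ^ (2 * n / (n - 2))) ^ ((n - 2) * (p - 1) / 2) := by
  have hn₂ : n - 2 ≠ 0 := by linarith
  have hexp : 2 * ((n - p * (n - 2)) / 2) + 2 * n / (n - 2) * ((n - 2) * (p - 1) / 2) = 2 * p := by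
    field_simp
    ring
  rw [Real.div_rpow (by positivity) (by positivity), ← Real.rpow_two, ← Real.rpow_two,
    ← Real.rpow_mul ht, ← Real.rpow_mul ht, ← Real.rpow_mul hw.le,
    div_mul_eq_mul_div, ← Real.rpow_add' ht (by rw [hexp]; positivity), hexp,
    div_eq_mul_inv, ← Real.rpow_neg hw.le]
  congr 2
  ring

theorem rpow_mul_rpow_le_rpow_of_le {n p H S M : ℝ} (hn : 2 < n) (hp : 1 ≤ p)
    (hpn : p ≤ n / (n - 2)) (hH : 0 ≤ H) (hS : 0 ≤ S) (hHM : H ≤ M)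
    (hSM : S ^ ((n - 2) / n) ≤ M) :
    H ^ ((n - p * (n - 2)) / 2) * S ^ ((n - 2) * (p - 1) / 2) ≤ M ^ p := by
  rw [le_div_iff₀ (by linarith)] at hpn
  have : 0 < n := by linarith
  have ha : 0 ≤ (n - p * (n - 2)) / 2 := by linarith
  have hb : 0 ≤ n * (p - 1) / 2 := by
    have := sub_nonneg.2 hp
    positivity
  calc H ^ ((n - p * (n - 2)) / 2) * S ^ ((n - 2) * (p - 1) / 2)
      = H ^ ((n - p * (n - 2)) / 2) * (S ^ ((n - 2) / n)) ^ (n * (p - 1) / 2) := by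
        rw [← Real.rpow_mul hS]
        congr 2
        field_simp
    _ ≤ M ^ ((n - p * (n - 2)) / 2) * M ^ (n * (p - 1) / 2) := by
        have := hH.trans hHM
        gcongr
    _ = M ^ p := by
        rw [← Real.rpow_add_of_nonneg (hH.trans hHM) ha hb]
        congr 1
        ring

theorem integral_norm_rpow_mul_rpow_le {X F : Type*} [TopologicalSpace X] [MeasurableSpace X]
    [OpensMeasurableSpace X] [NormedAddCommGroup F] {μ : Measure X} [IsFiniteMeasureOnCompacts μ]
    {u : X → F} {w : X → ℝ} (hu : Continuous u) (hc : HasCompactSupport u) (hw : Continuous w)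
    (hw₀ : ∀ x, 0 < w x) {n p : ℝ} (hn : 2 < n) (hp : 1 ≤ p) (hpn : p ≤ n / (n - 2)) :
    ∫ x, ‖u x‖ ^ (2 * p) * w x ^ (p * (n - 2) - n) ∂μ ≤
      (∫ x, ‖u x‖ ^ 2 / w x ^ 2 ∂μ) ^ ((n - p * (n - 2)) / 2) *
        (∫ x, ‖u x‖ ^ (2 * n / (n - 2)) ∂μ) ^ ((n - 2) * (p - 1) / 2) := by
  have hn₂ : 0 < n - 2 := sub_pos.2 hn
  have hp₁ : 0 ≤ p - 1 := sub_nonneg.2 hp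
  have hexp : 0 < 2 * n / (n - 2) := by positivity
  have hardy_int : Integrable (fun x ↦ ‖u x‖ ^ 2 / w x ^ 2) μ :=
    integrable_norm_sq_div hu hc (hw.pow 2) fun x ↦ pow_ne_zero 2 (hw₀ x).ne'
  have sobolev_int : Integrable (fun x ↦ ‖u x‖ ^ (2 * n / (n - 2))) μ :=
    (hu.norm.rpow_const fun _ ↦ .inr hexp.le).integrable_of_hasCompactSupport
      (hc.norm.rpow_const hexp.ne')
  simp only [fun x ↦ rpow_mul_rpow_eq_div_rpow_mul_rpow hn (zero_lt_one.trans_le hp)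
    (norm_nonneg (u x)) (hw₀ x)]
  rw [le_div_iff₀ hn₂] at hpn
  exact integral_rpow_mul_rpow_le hardy_int sobolev_int (fun x ↦ by positivity)
    (fun x ↦ by positivity) (by linarith) (by positivity) (by ring)

end Interpolation

theorem statement11_general {E F : Type*} [NormedAddCommGroup E] [InnerProductSpace ℝ E]
    [FiniteDimensional ℝ E] [MeasurableSpace E] [BorelSpace E] [NormedAddCommGroup F]
    [InnerProductSpace ℝ F] (μ : Measure E) [μ.IsAddHaarMeasure] (hn : 2 < finrank ℝ E) :
    ∃ C : ℝ, 0 < C ∧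
      ∀ p : ℝ, 1 ≤ p → p ≤ finrank ℝ E / (finrank ℝ E - 2) →
      ∀ u : E → F, ContDiff ℝ 1 u → HasCompactSupport u →
        (∫ x, ‖u x‖ ^ (2 * p) * (1 + ‖x‖) ^ (p * (finrank ℝ E - 2) - finrank ℝ E) ∂μ) ^ (1 / p)
          ≤ C * ∫ x, ‖fderiv ℝ u x‖ ^ 2 ∂μ := by
  have hn₂ : (2 : ℝ) < finrank ℝ E := mod_cast hn
  set C_hardy : ℝ := (2 / ((finrank ℝ E : ℝ) - 2)) ^ 2
  set C_sobolev : ℝ := (eLpNormLESNormFDerivOfEqInnerConst μ 2 : ℝ) ^ 2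
  have hC : 0 < C_hardy := by
    have := sub_pos.2 hn₂
    positivity
  refine ⟨max C_hardy C_sobolev, lt_max_of_lt_left hC, fun p hp hpn u hu hc ↦ ?_⟩
  have hD : 0 ≤ ∫ x, ‖fderiv ℝ u x‖ ^ 2 ∂μ := integral_nonneg fun x ↦ by positivity
  have hardy := (hardy_inequality_one_add_norm (μ := μ) hn hu hc).trans
    (mul_le_mul_of_nonneg_right (le_max_left C_hardy C_sobolev) hD)
  have sobolev := (sobolev_inequality_sq (μ := μ) hn hu hc).trans
    (mul_le_mul_of_nonneg_right (le_max_right C_hardy C_sobolev) hD)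
  rw [one_div, Real.rpow_inv_le_iff_of_pos (integral_nonneg fun x ↦ by positivity)
    (by positivity) (by linarith)]
  exact (integral_norm_rpow_mul_rpow_le hu.continuous hc (by fun_prop) (fun x ↦ by positivity)
    hn₂ hp hpn).trans
    (rpow_mul_rpow_le_rpow_of_le hn₂ hp hpn (integral_nonneg fun x ↦ by positivity)
      (integral_nonneg fun x ↦ by positivity) hardy sobolev)

end WeightedSobolev

/-- the weighted Sobolev inequality on Euclidean `ℝ⁴`:
`(∫ |u|^{2p} (1+|x|)^{2p−4})^{1/p} ≤ C ∫ |∇u|²` for `1 ≤ p ≤ 3/2` and `u ∈ C¹_c`. -/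
theorem statement11 : ∃ C : ℝ, 0 < C ∧
    ∀ p : ℝ, 1 ≤ p → p ≤ 3 / 2 →
    ∀ u : EuclideanSpace ℝ (Fin 4) → ℝ, ContDiff ℝ 1 u → HasCompactSupport u →
      (∫ x : EuclideanSpace ℝ (Fin 4), |u x| ^ (2 * p) * (1 + ‖x‖) ^ (2 * p - 4)) ^ (1 / p)
        ≤ C * ∫ x : EuclideanSpace ℝ (Fin 4), ‖fderiv ℝ u x‖ ^ 2 := by
  obtain ⟨C, hC, h⟩ := statement11_general (F := ℝ) (volume : Measure (EuclideanSpace ℝ (Fin 4)))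
    (by simp)
  refine ⟨C, hC, fun p hp hp' u ↦ ?_⟩
  have hweight : p * (4 - 2) - 4 = 2 * p - 4 := by ring
  simpa [hweight] using h p hp (by norm_num; linarith) u
end
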